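/- Let d ∈ ℕ, 1 ≤ p,q < ∞, and let S_d be an order 2 digital (t,d)-sequence over 𝔽_2 whose generating matrices E_i = (e_{i,k,ℓ})_{k,ℓ≥1} satisfy e_{i,k,ℓ} = 0 for all k > 2ℓ and all i ∈ {1,…,d}. Then there is a constant C > 0 depending only on p, q, d such that for all integers N ≥ 2: ∑_{j∈ℕ_{−1}^d} 2^{|j|(1−1/p)q} (∑_{m∈𝔻_j} |⟨D_{S_d}^N, h_{j,m}⟩|^p)^{q/p} ≤ C · 2^{qt} · N^{−q} (log N)^d. -/

import Mathlib

open MeasureTheory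
open scoped ENNReal

noncomputable section

/-- The closed unit cube `[0,1]^d`. -/
def unitCube (d : ℕ) : Set (Fin d → ℝ) := Set.univ.pi fun _ => Set.Icc (0:ℝ) 1

/-- The half-open unit cube `[0,1)^d`. -/
def unitCubeIco (d : ℕ) : Set (Fin d → ℝ) := Set.univ.pi fun _ => Set.Ico (0:ℝ) 1

/-- Discrepancy function of the first `N` points of the sequence `S` in `[0,1)^d`. -/
def discSeq (d : ℕ) (S : ℕ → Fin d → ℝ) (N : ℕ) (x : Fin d → ℝ) : ℝ :=
  (Nat.card {k : Fin N // ∀ i, S k i < x i} : ℝ) / N - ∏ i, x i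

/-- One-dimensional Haar function `h_{j,m}`, with `h_{-1,0} = 1_{[0,1)}`. -/
def haar1 (j : ℤ) (m : ℕ) (x : ℝ) : ℝ :=
  if j = -1 then (if 0 ≤ x ∧ x < 1 then 1 else 0)
  else if (m:ℝ)/2^j.toNat ≤ x ∧ x < ((m:ℝ) + 1/2)/2^j.toNat then 1
  else if ((m:ℝ) + 1/2)/2^j.toNat ≤ x ∧ x < ((m:ℝ)+1)/2^j.toNat then -1
  else 0

/-- `d`-dimensional (tensor product) Haar function. -/
def haarFn (d : ℕ) (j : Fin d → ℤ) (m : Fin d → ℕ) (x : Fin d → ℝ) : ℝ :=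
  ∏ i, haar1 (j i) (m i) (x i)

/-- Haar coefficient `⟨f, h_{j,m}⟩`. -/
def haarCoeff (d : ℕ) (f : (Fin d → ℝ) → ℝ) (j : Fin d → ℤ) (m : Fin d → ℕ) : ℝ :=
  ∫ x in unitCube d, f x * haarFn d j m x

/-- `|j| = max(j₁,0) + ⋯ + max(j_d,0)`. -/
def jnorm (d : ℕ) (j : Fin d → ℤ) : ℕ := ∑ i, (j i).toNat

/-- One-dimensional dyadic interval `I_{j,m}`. -/
def dyadicI (j : ℤ) (m : ℕ) : Set ℝ :=
  Set.Ico ((m:ℝ)/2^j.toNat) (((m:ℝ)+1)/2^j.toNat)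

/-- `d`-dimensional dyadic box `I_{j,m}`. -/
def dyadicBox (d : ℕ) (j : Fin d → ℤ) (m : Fin d → ℕ) : Set (Fin d → ℝ) :=
  Set.univ.pi fun i => dyadicI (j i) (m i)

/-- The index set `𝔻_j` as a finset. -/
def Dfin (d : ℕ) (j : Fin d → ℤ) : Finset (Fin d → ℕ) :=
  Fintype.piFinset fun i => Finset.range (2 ^ (j i).toNat)

/-- The index set `𝔻_j` for `j ∈ ℕ₀^d`. -/
def Dfin0 (d : ℕ) (j : Fin d → ℕ) : Finset (Fin d → ℕ) :=
  Fintype.piFinset fun i => Finset.range (2 ^ (j i))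

/-- Coordinate of the `k`-th point of a digital sequence over `𝔽₂` with generating
matrix `C` (`0`-based rows and columns). -/
def digitalCoord (C : ℕ → ℕ → ZMod 2) (k : ℕ) : ℝ :=
  ∑' i : ℕ,
    (((∑ ℓ ∈ Finset.range (k+1), C i ℓ * (if k.testBit ℓ then 1 else 0)).val : ℕ) : ℝ) / 2 ^ (i + 1)

/-- The digital sequence over `𝔽₂` generated by matrices `C 0, …, C (d-1)`. -/
def digitalSeq (d : ℕ) (C : Fin d → ℕ → ℕ → ZMod 2) : ℕ → Fin d → ℝ :=
  fun k j => digitalCoord (C j) k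

/-- `C 0, …, C (d-1)` generate an order `α` digital `(t,n,d)`-net over `𝔽₂`,
where the relevant submatrices have `q` rows (`q ≥ αn`) and `n` columns.
Row indices are `0`-based; the `1`-based row value of row `r` is `r+1`. -/
def IsOrderNet (α n t q d : ℕ) (C : Fin d → ℕ → ℕ → ZMod 2) : Prop :=
  ∀ (ν : Fin d → ℕ) (r : ∀ j : Fin d, Fin (ν j) → ℕ),
    (∀ j, StrictAnti (r j)) →
    (∀ j l, r j l < q) →
    (∑ j, ∑ l ∈ Finset.univ.filter (fun l : Fin (ν j) => (l:ℕ) < α), (r j l + 1)) ≤ α * n - t →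
    LinearIndependent (ZMod 2)
      (fun p : Σ j : Fin d, Fin (ν j) => fun col : Fin n => C p.1 (r p.1 p.2) col)

/-- `C 0, …, C (d-1)` generate an order `α` digital `(t,d)`-sequence over `𝔽₂`. -/
def IsOrderSeq (α t d : ℕ) (C : Fin d → ℕ → ℕ → ZMod 2) : Prop :=
  ∀ n : ℕ, t < α * n → IsOrderNet α n t (α * n) d C

/-- The condition `e_{i,k,ℓ} = 0` for all `k > 2ℓ` (in `1`-based indexing). -/
def Triangular2 (d : ℕ) (E : Fin d → ℕ → ℕ → ZMod 2) : Prop :=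
  ∀ i k ℓ, 2 * (ℓ + 1) < k + 1 → E i k ℓ = 0

open scoped Classical in
/-- The quantity `λ(U)⁻¹ ∑_{j ∈ ℕ₀^d} 2^{|j|} ∑_{m : I_{j,m} ⊆ U} ⟨f,h_{j,m}⟩²`. -/
def bmoSq (d : ℕ) (f : (Fin d → ℝ) → ℝ) (U : Set (Fin d → ℝ)) : ℝ≥0∞ :=
  (volume U)⁻¹ * ∑' j : Fin d → ℕ, ∑ m ∈ Dfin0 d j,
    if dyadicBox d (fun i => (j i : ℤ)) m ⊆ U then
      (2:ℝ≥0∞) ^ (∑ i, j i) * ENNReal.ofReal ((haarCoeff d f (fun i => (j i : ℤ)) m)^2)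
    else 0

/-- The BMO (semi-)norm `‖f | bmo^d‖`. -/
def bmoNorm (d : ℕ) (f : (Fin d → ℝ) → ℝ) : ℝ≥0∞ :=
  (⨆ U : {U : Set (Fin d → ℝ) // MeasurableSet U ∧ U ⊆ unitCubeIco d ∧ 0 < volume U},
    bmoSq d f U.1) ^ (1/2 : ℝ)

/-- The Orlicz norm of `f` on `[0,1)^d` with respect to the Young function `ψ`,
with the convention `inf ∅ = ∞`. -/
def orliczNorm (d : ℕ) (ψ : ℝ → ℝ) (f : (Fin d → ℝ) → ℝ) : ℝ≥0∞ :=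
  ⨅ K : {K : ℝ // 0 < K ∧ ∫ x in unitCubeIco d, ψ (|f x| / K) ≤ 1}, ENNReal.ofReal K.1

/-- `ψ` is a Young function which coincides with `exp(x^β) - 1` for all large `x`. -/
def IsYoungExp (β : ℝ) (ψ : ℝ → ℝ) : Prop :=
  ConvexOn ℝ (Set.Ici 0) ψ ∧ ψ 0 = 0 ∧ (∀ x : ℝ, 0 < x → 0 < ψ x) ∧
    ∃ x₀ : ℝ, ∀ x ≥ x₀, ψ x = Real.exp (x ^ β) - 1

/-- The set of valid Haar indices `j ∈ ℕ_{-1}^d`. -/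
def validJ (d : ℕ) : Set (Fin d → ℤ) := {j | ∀ i, -1 ≤ j i}

/-- The `q`-th power of the Haar-characterization of the `S^s_{p,q}B` norm:
`∑_{j ∈ ℕ_{-1}^d} 2^{|j|(s-1/p+1)q} (∑_{m ∈ 𝔻_j} |⟨f,h_{j,m}⟩|^p)^{q/p}`. -/
def besovSum (d : ℕ) (p q s : ℝ) (f : (Fin d → ℝ) → ℝ) : ℝ≥0∞ :=
  ∑' j : validJ d,
    ENNReal.ofReal ((2:ℝ) ^ ((jnorm d j.1 : ℝ) * (s - 1/p + 1) * q) *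
      (∑ m ∈ Dfin d j.1, |haarCoeff d f j.1 m| ^ p) ^ (q / p))

/-- Coordinate of the `k`-th point of a digital net with `q × n` generating matrix `C`. -/
def netCoord (q n : ℕ) (C : ℕ → ℕ → ZMod 2) (k : ℕ) : ℝ :=
  ∑ i ∈ Finset.range q,
    ((∑ ℓ ∈ Finset.range n, C i ℓ * (if k.testBit ℓ then 1 else 0)).val : ℝ) / 2 ^ (i + 1)

/-- `n_{μ+1}`, with the convention `n_{r+1} = log₂ N` (indices `1`-based, `n` stored `0`-based). -/
def nExt (r : ℕ) (n : Fin r → ℕ) (N : ℕ) (μ : ℕ) : ℝ :=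
  if h : μ < r then (n ⟨μ, h⟩ : ℝ) else Real.logb 2 N

/-- `n_μ`, with the convention `n_0 = 0` (indices `1`-based, `n` stored `0`-based). -/
def nPrev (r : ℕ) (n : Fin r → ℕ) (μ : ℕ) : ℝ :=
  if h : 1 ≤ μ ∧ μ ≤ r then (n ⟨μ - 1, by omega⟩ : ℝ) else 0

/-- The dyadic square function `Sf`, valued in `ℝ≥0∞`. -/
def sqFnE (d : ℕ) (f : (Fin d → ℝ) → ℝ) (x : Fin d → ℝ) : ℝ≥0∞ :=
  (∑' j : validJ d, ∑ m ∈ Dfin d j.1,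
    ENNReal.ofReal ((2:ℝ) ^ (2 * jnorm d j.1) * (haarCoeff d f j.1 m)^2 *
      (dyadicBox d j.1 m).indicator (fun _ => (1:ℝ)) x)) ^ (1/2 : ℝ)

/-- `sup_{p > 1} p^{-1/β} ‖f‖_{L_p([0,1]^d)}`. -/
def supLp (d : ℕ) (β : ℝ) (f : (Fin d → ℝ) → ℝ) : ℝ≥0∞ :=
  ⨆ p : {p : ℝ // 1 < p},
    ENNReal.ofReal ((p:ℝ) ^ (-(1/β))) * eLpNorm f (ENNReal.ofReal (p:ℝ)) (volume.restrict (unitCube d))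

/-- `‖f | 𝒟₀^d‖² = ∑_{j ∈ ℕ₀^d} 2^{|j|} ∑_{m ∈ 𝔻_j} ⟨f,h_{j,m}⟩²`. -/
def dNormSq (d : ℕ) (f : (Fin d → ℝ) → ℝ) : ℝ≥0∞ :=
  ∑' j : Fin d → ℕ, ∑ m ∈ Dfin0 d j,
    ENNReal.ofReal ((2:ℝ) ^ (∑ i, j i) * (haarCoeff d f (fun i => (j i : ℤ)) m)^2)

/-- `‖f | 𝒟₀^d‖`. -/
def dNorm (d : ℕ) (f : (Fin d → ℝ) → ℝ) : ℝ≥0∞ := (dNormSq d f) ^ (1/2 : ℝ)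


/-- The `ρ`-th binary digit (0-based) of the `k`-th point of a one-dimensional digital sequence. -/
def dig (C : ℕ → ℕ → ZMod 2) (ρ k : ℕ) : ZMod 2 :=
  ∑ ℓ ∈ Finset.range (k+1), C ρ ℓ * (if k.testBit ℓ then 1 else 0)

lemma dig_eq (C : ℕ → ℕ → ZMod 2) (ρ k K : ℕ) (h : k < 2 ^ K) :
    dig C ρ k = ∑ ℓ ∈ Finset.range K, C ρ ℓ * (if k.testBit ℓ then 1 else 0) := by
  have key : ∀ A B : ℕ, A ≤ B → k < 2 ^ A →
      ∑ ℓ ∈ Finset.range A, C ρ ℓ * (if k.testBit ℓ then 1 else 0) =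
      ∑ ℓ ∈ Finset.range B, C ρ ℓ * (if k.testBit ℓ then (1 : ZMod 2) else 0) := by
    intro A B hAB hk
    apply Finset.sum_subset (Finset.range_mono hAB)
    intro x _ hx
    have hx' : A ≤ x := by simpa using hx
    have : k.testBit x = false := Nat.testBit_lt_two_pow (lt_of_lt_of_le hk (Nat.pow_le_pow_right (by norm_num) hx'))
    simp [this]
  have h1 : k < 2 ^ (k+1) := lt_of_lt_of_le (Nat.lt_two_pow_self) (Nat.pow_le_pow_right (by norm_num) (by omega))
  unfold dig
  rcases le_total K (k+1) with hK | hK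
  · exact (key K (k+1) hK h).symm
  · exact key (k+1) K hK h1

lemma dig_xor (C : ℕ → ℕ → ZMod 2) (ρ k w : ℕ) : dig C ρ (k ^^^ w) = dig C ρ k + dig C ρ w := by
  have h1 : k < 2 ^ (k + w) := lt_of_lt_of_le (Nat.lt_two_pow_self) (Nat.pow_le_pow_right (by norm_num) (by omega))
  have h2 : w < 2 ^ (k + w) := lt_of_lt_of_le (Nat.lt_two_pow_self) (Nat.pow_le_pow_right (by norm_num) (by omega))
  rw [dig_eq C ρ _ _ (Nat.xor_lt_two_pow h1 h2), dig_eq C ρ _ _ h1, dig_eq C ρ _ _ h2,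
    ← Finset.sum_add_distrib]
  apply Finset.sum_congr rfl
  intro x _
  rw [Nat.testBit_xor]
  cases k.testBit x <;> cases w.testBit x <;> simp
  rw [← two_mul]
  have : (2 : ZMod 2) = 0 := by decide
  simp [this]

lemma dig_zero_of_tri (C : ℕ → ℕ → ZMod 2) (hC : ∀ k ℓ, 2 * (ℓ + 1) < k + 1 → C k ℓ = 0)
    (ρ k : ℕ) (h : 2 * k + 2 ≤ ρ) : dig C ρ k = 0 := by
  unfold dig
  apply Finset.sum_eq_zero
  intro x hx
  have : x < k + 1 := by simpa using hx
  rw [hC ρ x (by omega), zero_mul]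

/-- Independent vectors give a surjective evaluation. -/
lemma surj_of_linInd {ι : Type*} [Finite ι] {n : ℕ} (v : ι → Fin n → ZMod 2)
    (hv : LinearIndependent (ZMod 2) v) (τ : ι → ZMod 2) :
    ∃ x : Fin n → ZMod 2, ∀ p, ∑ c, v p c * x c = τ p := by
  obtain ⟨f, hf⟩ := LinearMap.exists_leftInverse_of_injective (Finsupp.linearCombination (ZMod 2) v) (LinearMap.ker_eq_bot.mpr hv)
  let g : (Fin n → ZMod 2) →ₗ[ZMod 2] ZMod 2 := (Finsupp.linearCombination (ZMod 2) τ).comp f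
  have hg : ∀ p, g (v p) = τ p := by
    intro p
    have : f (Finsupp.linearCombination (ZMod 2) v (Finsupp.single p 1)) = Finsupp.single p 1 := by
      have := congrArg (fun F => F (Finsupp.single p 1)) hf
      simpa using this
    have h2 : f (v p) = Finsupp.single p 1 := by simpa using this
    simp [g, h2]
  refine ⟨fun c => g (Pi.single c 1), fun p => ?_⟩
  rw [← hg p]
  conv_rhs => rw [show v p = ∑ c, v p c • (Pi.single c 1 : Fin n → ZMod 2) from by
    ext i; simp [Finset.sum_apply, Pi.single_apply]]
  rw [map_sum]
  simp

lemma exists_flip (d n t : ℕ) (C : Fin d → ℕ → ℕ → ZMod 2) (hC : IsOrderNet 2 n t (2 * n) d C)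
    (R : Fin d → Finset ℕ) (K : Fin d → ℕ)
    (h1 : ∀ i, ∀ x ∈ R i, x + 1 ≤ K i)
    (h2 : ∀ i, ∀ x ∈ R i, ∀ y ∈ R i, x < y → (x + 1) + (y + 1) ≤ K i)
    (hK : ∑ i, K i ≤ 2 * n - t) (τ : Fin d → ℕ → ZMod 2) :
    ∃ w < 2 ^ n, ∀ i, ∀ ρ ∈ R i, dig (C i) ρ w = τ i ρ := by
  let r : ∀ j : Fin d, Fin ((R j).card) → ℕ := fun j l => (R j).orderEmbOfFin rfl (Fin.rev l)
  have hr : ∀ j, StrictAnti (r j) := by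
    intro j a b hab
    apply ((R j).orderEmbOfFin rfl).strictMono
    exact Fin.rev_lt_rev.mpr hab
  have hmem : ∀ j l, r j l ∈ R j := fun j l => Finset.orderEmbOfFin_mem _ _ _
  have hKi : ∀ i, K i ≤ 2 * n - t := fun i =>
    (Finset.single_le_sum (f := K) (fun _ _ => Nat.zero_le _) (Finset.mem_univ i)).trans hK
  have hlin := hC (fun j => (R j).card) r hr (fun j l => by
    have := h1 j _ (hmem j l); have := hKi j; omega) (by
    refine le_trans (Finset.sum_le_sum fun j _ => ?_) hK
    rcases Nat.lt_or_ge (R j).card 2 with hlt | hge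
    · rcases Nat.eq_zero_or_pos (R j).card with h0 | hpos
      · have : IsEmpty (Fin (R j).card) := by rw [h0]; infer_instance
        simp
      · have hone : (R j).card = 1 := by omega
        have : (Finset.univ.filter (fun l : Fin ((R j).card) => (l:ℕ) < 2)) ⊆ {⟨0, hpos⟩} := by
          intro l _
          simp only [Finset.mem_singleton]
          ext
          have := l.2
          simp only []
          omega
        refine (Finset.sum_le_sum_of_subset this).trans ?_
        rw [Finset.sum_singleton]
        exact h1 j _ (hmem j _)
    · have : (Finset.univ.filter (fun l : Fin ((R j).card) => (l:ℕ) < 2)) ⊆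
          {⟨0, by omega⟩, ⟨1, by omega⟩} := by
        intro l hl
        simp only [Finset.mem_filter, Finset.mem_univ, true_and] at hl
        simp only [Finset.mem_insert, Finset.mem_singleton, Fin.ext_iff]
        omega
      refine (Finset.sum_le_sum_of_subset this).trans ?_
      rw [Finset.sum_pair (by simp [Fin.ext_iff])]
      rw [add_comm]
      exact h2 j _ (hmem j _) _ (hmem j _) (hr j (by simp [Fin.lt_def])))
  obtain ⟨x, hx⟩ := surj_of_linInd _ hlin (fun p => τ p.1 (r p.1 p.2))
  refine ⟨Nat.ofBits (fun c => decide (x c = 1)), Nat.ofBits_lt_two_pow _, ?_⟩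
  intro i ρ hρ
  obtain ⟨l, hl⟩ : ∃ l, r i l = ρ := by
    have : ρ ∈ Set.range ((R i).orderEmbOfFin rfl) := by simpa using hρ
    obtain ⟨l, hl⟩ := this
    exact ⟨Fin.rev l, by simpa [r] using hl⟩
  have := hx ⟨i, l⟩
  rw [dig_eq _ _ _ n (Nat.ofBits_lt_two_pow _), Finset.sum_range]
  simp only [hl] at this
  rw [← this]
  apply Finset.sum_congr rfl
  intro c _
  congr 1
  rw [Nat.testBit_ofBits_lt _ _ c.2]
  have h01 : ∀ z : ZMod 2, (if (decide (z = 1)) = true then (1 : ZMod 2) else 0) = z := by decide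
  exact h01 (x c)


/-- sign of a binary digit -/
def sg (x : ZMod 2) : ℝ := if x = 0 then 1 else -1

lemma sg_add (x y : ZMod 2) : sg (x + y) = sg x * sg y := by
  have h : ∀ z : ZMod 2, z = 0 ∨ z = 1 := by decide
  have h2 : (1 : ZMod 2) + 1 = 0 := by decide
  rcases h x with rfl | rfl <;> rcases h y with rfl | rfl <;> simp [sg, h2]

lemma sg_abs (x : ZMod 2) : |sg x| = 1 := by
  unfold sg; split_ifs <;> simp

/-- integer formed by the first `J` digits -/
def prefD (b : ℕ → ZMod 2) : ℕ → ℕ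
  | 0 => 0
  | J+1 => 2 * prefD b J + (b J).val

lemma prefD_lt (b : ℕ → ZMod 2) (J : ℕ) : prefD b J < 2 ^ J := by
  induction J with
  | zero => simp [prefD]
  | succ J ih =>
    have := ZMod.val_lt (b J)
    simp only [prefD, pow_succ]
    omega

lemma prefD_inj (b b' : ℕ → ZMod 2) (J : ℕ) :
    prefD b J = prefD b' J ↔ ∀ ρ < J, b ρ = b' ρ := by
  induction J with
  | zero => simp [prefD]
  | succ J ih =>
    have h1 := ZMod.val_lt (b J)
    have h2 := ZMod.val_lt (b' J)
    simp only [prefD]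
    constructor
    · intro h ρ hρ
      rcases Nat.lt_succ_iff_lt_or_eq.mp hρ with h' | rfl
      · exact ih.mp (by omega) ρ h'
      · exact ZMod.val_injective 2 (by omega)
    · intro h
      rw [ih.mpr (fun ρ hρ => h ρ (by omega)), h J (by omega)]

lemma prefD_surj (J : ℕ) : ∀ m < 2 ^ J, ∃ b : ℕ → ZMod 2, prefD b J = m := by
  induction J with
  | zero => intro m hm; exact ⟨0, by simp at hm; simp [prefD, hm]⟩
  | succ J ih =>
    intro m hm
    obtain ⟨b, hb⟩ := ih (m / 2) (by rw [pow_succ] at hm; omega)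
    refine ⟨fun ρ => if ρ = J then (m : ZMod 2) else b ρ, ?_⟩
    have : prefD (fun ρ => if ρ = J then (m : ZMod 2) else b ρ) J = prefD b J := by
      rw [prefD_inj]; intro ρ hρ; simp [hρ.ne]
    simp only [prefD, this, hb, if_true]
    rw [ZMod.val_natCast]
    omega

/-- the `k`-th point lies in the dyadic box with index `m` at level `J` -/
def inBox {d : ℕ} (C : Fin d → ℕ → ℕ → ZMod 2) (J m : Fin d → ℕ) (k : ℕ) : Prop :=
  ∀ i, prefD (fun ρ => dig (C i) ρ k) (J i) = m i

instance {d : ℕ} (C : Fin d → ℕ → ℕ → ZMod 2) (J m : Fin d → ℕ) : DecidablePred (inBox C J m) :=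
  fun _ => inferInstanceAs (Decidable (∀ _, _))

/-- aligned block of length `2^n` -/
def blk (n A : ℕ) : Finset ℕ := Finset.Ico (A * 2 ^ n) ((A + 1) * 2 ^ n)

lemma mem_blk (n A k : ℕ) : k ∈ blk n A ↔ k / 2 ^ n = A := by
  rw [blk, Finset.mem_Ico, Nat.div_eq_iff (by positivity)]
  have : 0 < 2 ^ n := by positivity
  constructor
  · rintro ⟨h1, h2⟩; constructor
    · omega
    · rw [Nat.add_mul] at h2; omega
  · rintro ⟨h1, h2⟩; constructor
    · omega
    · rw [Nat.add_mul]; omega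

lemma xor_mem_blk (n A k w : ℕ) (hw : w < 2 ^ n) (hk : k ∈ blk n A) : k ^^^ w ∈ blk n A := by
  rw [mem_blk] at *
  rw [Nat.xor_div_two_pow, hk, Nat.div_eq_of_lt hw, Nat.xor_zero]

lemma xor_xor_self (k w : ℕ) : k ^^^ w ^^^ w = k := by
  rw [Nat.xor_assoc, Nat.xor_self, Nat.xor_zero]

lemma sum_blk_xor (n A w : ℕ) (hw : w < 2 ^ n) (F : ℕ → ℝ) :
    ∑ k ∈ blk n A, F (k ^^^ w) = ∑ k ∈ blk n A, F k :=
  Finset.sum_nbij' (fun k => k ^^^ w) (fun k => k ^^^ w)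
    (fun k hk => xor_mem_blk n A k w hw hk) (fun k hk => xor_mem_blk n A k w hw hk)
    (fun k _ => xor_xor_self k w) (fun k _ => xor_xor_self k w) (fun _ _ => rfl)

lemma card_blk (n A : ℕ) : (blk n A).card = 2 ^ n := by
  simp [blk, Nat.add_mul]

lemma count_box (d n t : ℕ) (C : Fin d → ℕ → ℕ → ZMod 2) (hC : IsOrderNet 2 n t (2 * n) d C)
    (J m : Fin d → ℕ) (hm : ∀ i, m i < 2 ^ J i) (hJ : 2 * ∑ i, J i ≤ 2 * n - t) (A : ℕ) :
    ((blk n A).filter (inBox C J m)).card * 2 ^ (∑ i, J i) = 2 ^ n := by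
  have hflip := exists_flip d n t C hC (fun i => Finset.range (J i)) (fun i => 2 * J i)
    (fun i x hx => by simp at hx; omega) (fun i x hx y hy hxy => by simp at hx hy; omega)
    (by rw [← Finset.mul_sum]; exact hJ)
  have heq : ∀ m' ∈ Fintype.piFinset (fun i => Finset.range (2 ^ J i)),
      ((blk n A).filter (inBox C J m')).card = ((blk n A).filter (inBox C J m)).card := by
    intro m' hm'
    simp only [Fintype.mem_piFinset, Finset.mem_range] at hm'
    choose b hb using fun i => prefD_surj (J i) (m i) (hm i)
    choose b' hb' using fun i => prefD_surj (J i) (m' i) (hm' i)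
    obtain ⟨w, hw, hwt⟩ := hflip (fun i ρ => b i ρ + b' i ρ)
    have h2 : ∀ x y : ZMod 2, x + (x + y) = y := by decide
    have h2' : ∀ x y : ZMod 2, x + (y + x) = y := by decide
    refine Finset.card_nbij' (fun k => k ^^^ w) (fun k => k ^^^ w) ?_ ?_
      (fun k _ => xor_xor_self k w) (fun k _ => xor_xor_self k w)
    · intro k hk
      simp only [Finset.coe_filter, Set.mem_setOf_eq] at hk ⊢
      refine ⟨xor_mem_blk n A k w hw hk.1, fun i => ?_⟩
      rw [← hb i, prefD_inj]
      intro ρ hρ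
      have := hk.2 i
      rw [← hb' i, prefD_inj] at this
      rw [dig_xor, this ρ hρ, hwt i ρ (by simpa using hρ), h2']
    · intro k hk
      simp only [Finset.coe_filter, Set.mem_setOf_eq] at hk ⊢
      refine ⟨xor_mem_blk n A k w hw hk.1, fun i => ?_⟩
      rw [← hb' i, prefD_inj]
      intro ρ hρ
      have := hk.2 i
      rw [← hb i, prefD_inj] at this
      rw [dig_xor, this ρ hρ, hwt i ρ (by simpa using hρ), h2]
  have hfib := Finset.card_eq_sum_card_fiberwise (s := blk n A)
    (t := Fintype.piFinset (fun i => Finset.range (2 ^ J i)))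
    (f := fun k i => prefD (fun ρ => dig (C i) ρ k) (J i))
    (by intro k _; simp [prefD_lt])
  rw [card_blk] at hfib
  rw [hfib]
  have : ∀ m' ∈ Fintype.piFinset (fun i => Finset.range (2 ^ J i)),
      ((blk n A).filter (fun k => (fun i => prefD (fun ρ => dig (C i) ρ k) (J i)) = m')).card
        = ((blk n A).filter (inBox C J m)).card := by
    intro m' hm'
    rw [← heq m' hm']
    congr 1
    apply Finset.filter_congr
    intro k _
    simp only [inBox, funext_iff]
  rw [Finset.sum_congr rfl this, Finset.sum_const, Fintype.card_piFinset]
  simp [Finset.prod_pow_eq_pow_sum, mul_comm]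

/-- rows used by the `a`-th term of the expansion -/
def Qs (j : ℤ) (a : ℕ) : Finset ℕ :=
  if a = 0 then ∅ else if j = -1 then {a - 1} else {j.toNat, j.toNat + a}

/-- character of the `a`-th term -/
def chi (C : ℕ → ℕ → ZMod 2) (j : ℤ) (a k : ℕ) : ℝ := ∏ ρ ∈ Qs j a, sg (dig C ρ k)

/-- cost of the `a`-th term -/
def wt (a : ℕ) : ℕ := if a = 0 then 0 else a + 2

lemma chi_abs (C : ℕ → ℕ → ZMod 2) (j : ℤ) (a k : ℕ) : |chi C j a k| = 1 := by
  simp [chi, Finset.abs_prod, sg_abs]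

lemma chi_xor (C : ℕ → ℕ → ZMod 2) (j : ℤ) (a k w : ℕ) :
    chi C j a (k ^^^ w) = chi C j a k * chi C j a w := by
  simp only [chi, dig_xor, sg_add, Finset.prod_mul_distrib]

lemma char_sum (d n t : ℕ) (C : Fin d → ℕ → ℕ → ZMod 2) (hC : IsOrderNet 2 n t (2 * n) d C)
    (j : Fin d → ℤ) (m : Fin d → ℕ) (a : Fin d → ℕ) (ha : a ≠ 0)
    (hJ : 2 * ∑ i, (j i).toNat + ∑ i, wt (a i) ≤ 2 * n - t) (A : ℕ) :
    ∑ k ∈ blk n A, (if inBox C (fun i => (j i).toNat) m k then ∏ i, chi (C i) (j i) (a i) k else 0)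
      = 0 := by
  obtain ⟨i0, hi0⟩ : ∃ i, a i ≠ 0 := by
    by_contra h; push Not at h; exact ha (funext h)
  -- the flipped row
  obtain ⟨ρ0, hρ0, hρJ⟩ : ∃ ρ ∈ Qs (j i0) (a i0), (j i0).toNat ≤ ρ := by
    unfold Qs
    simp only [hi0, if_false]
    split_ifs with h
    · exact ⟨_, by simp; rfl, by simp [h]⟩
    · exact ⟨(j i0).toNat, by simp, le_rfl⟩
  obtain ⟨w, hw, hwt⟩ := exists_flip d n t C hC
    (fun i => Finset.range (j i).toNat ∪ Qs (j i) (a i)) (fun i => 2 * (j i).toNat + wt (a i))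
    (by
      intro i x hx
      simp only [Finset.mem_union, Finset.mem_range, Qs, wt] at hx ⊢
      split_ifs at hx ⊢ with h1 h2 <;> simp at hx <;> omega)
    (by
      intro i x hx y hy hxy
      simp only [Finset.mem_union, Finset.mem_range, Qs, wt] at hx hy ⊢
      split_ifs at hx hy ⊢ with h1 h2 <;> simp at hx hy <;> (try simp [h2] at hx hy ⊢) <;> omega)
    (by rw [Finset.sum_add_distrib, ← Finset.mul_sum]; exact hJ)
    (fun i ρ => if i = i0 ∧ ρ = ρ0 then 1 else 0)
  have hbox : ∀ k, inBox C (fun i => (j i).toNat) m (k ^^^ w) ↔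
      inBox C (fun i => (j i).toNat) m k := by
    intro k
    apply forall_congr'
    intro i
    have : prefD (fun ρ => dig (C i) ρ (k ^^^ w)) ((j i).toNat) =
        prefD (fun ρ => dig (C i) ρ k) ((j i).toNat) := by
      rw [prefD_inj]
      intro ρ hρ
      rw [dig_xor, hwt i ρ (by simp [hρ]), if_neg, add_zero]
      rintro ⟨rfl, rfl⟩
      omega
    rw [this]
  have hchi : ∏ i, chi (C i) (j i) (a i) w = -1 := by
    rw [Finset.prod_eq_single i0]
    · unfold chi
      rw [Finset.prod_eq_single_of_mem ρ0 hρ0]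
      · rw [hwt i0 ρ0 (by simp [hρ0])]; simp [sg]
      · intro ρ hρ hne
        rw [hwt i0 ρ (by simp [hρ])]; simp [sg, hne]
    · intro i _ hne
      unfold chi
      apply Finset.prod_eq_one
      intro ρ hρ
      rw [hwt i ρ (by simp [hρ])]; simp [sg, hne]
    · simp
  have hs := sum_blk_xor n A w hw (fun k => if inBox C (fun i => (j i).toNat) m k then
    ∏ i, chi (C i) (j i) (a i) k else 0)
  simp only [hbox, chi_xor, Finset.prod_mul_distrib, hchi, mul_neg, mul_one] at hs
  have h3 : ∑ k ∈ blk n A, (if inBox C (fun i => (j i).toNat) m k then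
      -∏ i, chi (C i) (j i) (a i) k else 0) = - ∑ k ∈ blk n A,
      (if inBox C (fun i => (j i).toNat) m k then ∏ i, chi (C i) (j i) (a i) k else 0) := by
    rw [← Finset.sum_neg_distrib]
    apply Finset.sum_congr rfl
    intro k _
    split_ifs <;> simp
  rw [h3] at hs
  linarith


/-- The integrand `∏ᵢ ∫_{zᵢ}^1 h_{jᵢ,mᵢ}` at the `k`-th point, in expanded form. -/
def Fx {d : ℕ} (C : Fin d → ℕ → ℕ → ZMod 2) (j : Fin d → ℤ) (m : Fin d → ℕ) (c : Fin d → ℕ → ℝ)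
    (M k : ℕ) : ℝ :=
  ∏ i, ((2 ^ (j i).toNat : ℝ)⁻¹ * ((if prefD (fun ρ => dig (C i) ρ k) (j i).toNat = m i then 1 else 0)
    * ∑ a ∈ Finset.range (M+1), c i a * chi (C i) (j i) a k))

/-- Its mean. -/
def Vx {d : ℕ} (j : Fin d → ℤ) (c : Fin d → ℕ → ℝ) : ℝ :=
  ∏ i, ((2 ^ (j i).toNat : ℝ)⁻¹ * ((2 ^ (j i).toNat : ℝ)⁻¹ * c i 0))

lemma Vx_eq {d : ℕ} (j : Fin d → ℤ) (c : Fin d → ℕ → ℝ) :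
    Vx j c = (2 ^ jnorm d j : ℝ)⁻¹ * ((2 ^ jnorm d j : ℝ)⁻¹ * ∏ i, c i 0) := by
  simp only [Vx, Finset.prod_mul_distrib, Finset.prod_inv_distrib, Finset.prod_pow_eq_pow_sum, jnorm]

lemma Fx_eq {d : ℕ} (C : Fin d → ℕ → ℕ → ZMod 2) (j : Fin d → ℤ) (m : Fin d → ℕ) (c : Fin d → ℕ → ℝ)
    (M k : ℕ) :
    Fx C j m c M k = (2 ^ jnorm d j : ℝ)⁻¹ * ∑ a ∈ Fintype.piFinset (fun _ : Fin d => Finset.range (M+1)),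
      (∏ i, c i (a i)) * (if inBox C (fun i => (j i).toNat) m k then
        ∏ i, chi (C i) (j i) (a i) k else 0) := by
  simp only [Fx]
  rw [Finset.prod_mul_distrib, Finset.prod_mul_distrib, Finset.prod_univ_sum]
  rw [Finset.prod_inv_distrib, Finset.prod_pow_eq_pow_sum, Finset.prod_ite_zero]
  simp only [jnorm, Finset.prod_mul_distrib, Finset.mem_univ, forall_true_left,
    Finset.prod_const_one]
  congr 1
  rw [Finset.mul_sum]
  apply Finset.sum_congr rfl
  intro a _
  by_cases h : ∀ i, prefD (fun ρ => dig (C i) ρ k) (j i).toNat = m i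
  · have h' : inBox C (fun i => (j i).toNat) m k := h
    rw [if_pos h, if_pos h', one_mul]
  · have h' : ¬ inBox C (fun i => (j i).toNat) m k := h
    rw [if_neg h, if_neg h', zero_mul, mul_zero]

lemma sum_wt_le (M : ℕ) : ∑ a ∈ Finset.range (M+1), 4 * (3/4 : ℝ) ^ wt a ≤ 16 := by
  have h1 : ∀ a ∈ Finset.range (M+1), 4 * (3/4 : ℝ) ^ wt a ≤ 4 * (3/4 : ℝ) ^ a := by
    intro a _
    have : (3/4 : ℝ) ^ wt a ≤ (3/4 : ℝ) ^ a := by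
      apply pow_le_pow_of_le_one (by norm_num) (by norm_num)
      unfold wt; split_ifs <;> omega
    linarith
  refine (Finset.sum_le_sum h1).trans ?_
  rw [← Finset.mul_sum, geom_sum_eq (by norm_num)]
  have : (0:ℝ) ≤ (3/4 : ℝ) ^ (M+1) := by positivity
  rw [show (3/4 - 1 : ℝ) = -(1/4) by norm_num, div_neg, div_div_eq_mul_div]
  linarith

lemma sum_wt_pi_le (d M : ℕ) : ∑ a ∈ Fintype.piFinset (fun _ : Fin d => Finset.range (M+1)),
    ∏ i, (4 * (3/4 : ℝ) ^ wt (a i)) ≤ 16 ^ d := by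
  rw [← Finset.prod_univ_sum (fun _ : Fin d => Finset.range (M+1)) (fun _ a => 4 * (3/4 : ℝ) ^ wt a)]
  refine (Finset.prod_le_prod (fun i _ => Finset.sum_nonneg fun a _ => by positivity)
    (fun i _ => sum_wt_le M)).trans ?_
  simp

lemma prod_c_le {d : ℕ} (c : Fin d → ℕ → ℝ) (hc : ∀ i a, |c i a| ≤ 4 * (1/2) ^ wt a) (a : Fin d → ℕ)
    (S : ℕ) (hS : S ≤ ∑ i, wt (a i)) :
    |∏ i, c i (a i)| ≤ (2/3) ^ S * ∏ i, (4 * (3/4 : ℝ) ^ wt (a i)) := by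
  rw [Finset.abs_prod]
  refine (Finset.prod_le_prod (fun i _ => abs_nonneg _) (fun i _ => hc i (a i))).trans ?_
  have : ∀ i, 4 * (1/2 : ℝ) ^ wt (a i) = (2/3) ^ wt (a i) * (4 * (3/4 : ℝ) ^ wt (a i)) := by
    intro i
    rw [show (1/2:ℝ) = (2/3) * (3/4) by norm_num, mul_pow]; ring
  simp only [this]
  rw [Finset.prod_mul_distrib, Finset.prod_pow_eq_pow_sum]
  apply mul_le_mul_of_nonneg_right
  · exact pow_le_pow_of_le_one (by norm_num) (by norm_num) hS
  · exact Finset.prod_nonneg fun i _ => by positivity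

lemma Fx_abs {d : ℕ} (C : Fin d → ℕ → ℕ → ZMod 2) (j : Fin d → ℤ) (m : Fin d → ℕ) (c : Fin d → ℕ → ℝ)
    (hc : ∀ i a, |c i a| ≤ 4 * (1/2) ^ wt a) (M k : ℕ) :
    |Fx C j m c M k| ≤ (2 ^ jnorm d j : ℝ)⁻¹ * 16 ^ d *
      (if inBox C (fun i => (j i).toNat) m k then 1 else 0) := by
  rw [Fx_eq, abs_mul, abs_of_nonneg (by positivity : (0:ℝ) ≤ (2 ^ jnorm d j : ℝ)⁻¹), mul_assoc]
  apply mul_le_mul_of_nonneg_left _ (by positivity)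
  split_ifs with h
  · refine (Finset.abs_sum_le_sum_abs _ _).trans ?_
    rw [mul_one]
    refine le_trans (Finset.sum_le_sum fun a _ => ?_) (sum_wt_pi_le d M)
    rw [abs_mul, Finset.abs_prod (s := Finset.univ) (f := fun i => chi (C i) (j i) (a i) k)]
    simp only [chi_abs, Finset.prod_const_one, mul_one]
    simpa using prod_c_le c hc a 0 (Nat.zero_le _)
  · simp

lemma block_err (d n t : ℕ) (C : Fin d → ℕ → ℕ → ZMod 2) (hC : IsOrderNet 2 n t (2 * n) d C)
    (j : Fin d → ℤ) (m : Fin d → ℕ) (hm : ∀ i, m i < 2 ^ (j i).toNat) (c : Fin d → ℕ → ℝ)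
    (hc : ∀ i a, |c i a| ≤ 4 * (1/2) ^ wt a) (M A S : ℕ) (hS : 2 * jnorm d j + S = 2 * n - t) :
    |∑ k ∈ blk n A, Fx C j m c M k - 2 ^ n * Vx j c| ≤
      (2 ^ jnorm d j : ℝ)⁻¹ * (2 ^ n / 2 ^ jnorm d j * (2/3) ^ S * 16 ^ d) := by
  set T : (Fin d → ℕ) → ℝ := fun a => ∑ k ∈ blk n A,
    (if inBox C (fun i => (j i).toNat) m k then ∏ i, chi (C i) (j i) (a i) k else 0) with hT
  have hcnt := count_box d n t C hC (fun i => (j i).toNat) m hm (by unfold jnorm at hS; omega) A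
  have hcnt' : (((blk n A).filter (inBox C (fun i => (j i).toNat) m)).card : ℝ) =
      2 ^ n / 2 ^ jnorm d j := by
    rw [eq_div_iff (by positivity)]
    exact_mod_cast hcnt
  have hT0 : T 0 = 2 ^ n / 2 ^ jnorm d j := by
    rw [← hcnt']
    simp [hT, chi, Qs]
  have hTb : ∀ a, |T a| ≤ 2 ^ n / 2 ^ jnorm d j := by
    intro a
    rw [← hcnt']
    refine (Finset.abs_sum_le_sum_abs _ _).trans ?_
    rw [Finset.card_filter]
    push_cast
    apply Finset.sum_le_sum
    intro k _
    split_ifs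
    · rw [Finset.abs_prod]; simp [chi_abs]
    · simp
  have hsum : ∑ k ∈ blk n A, Fx C j m c M k = (2 ^ jnorm d j : ℝ)⁻¹ *
      ∑ a ∈ Fintype.piFinset (fun _ : Fin d => Finset.range (M+1)), (∏ i, c i (a i)) * T a := by
    simp only [Fx_eq, ← Finset.mul_sum]
    rw [Finset.sum_comm]
    simp only [hT, ← Finset.mul_sum]
  have h0 : (0 : Fin d → ℕ) ∈ Fintype.piFinset (fun _ : Fin d => Finset.range (M+1)) := by simp
  rw [hsum, ← Finset.add_sum_erase _ _ h0, hT0, Vx_eq]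
  have : (2 ^ jnorm d j : ℝ)⁻¹ * ((∏ i, c i ((0 : Fin d → ℕ) i)) * (2 ^ n / 2 ^ jnorm d j) +
      ∑ a ∈ (Fintype.piFinset (fun _ : Fin d => Finset.range (M+1))).erase 0, (∏ i, c i (a i)) * T a)
      - 2 ^ n * ((2 ^ jnorm d j : ℝ)⁻¹ * ((2 ^ jnorm d j : ℝ)⁻¹ * ∏ i, c i 0)) =
      (2 ^ jnorm d j : ℝ)⁻¹ *
      ∑ a ∈ (Fintype.piFinset (fun _ : Fin d => Finset.range (M+1))).erase 0, (∏ i, c i (a i)) * T a := by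
    simp only [Pi.zero_apply]
    ring
  rw [this, abs_mul, abs_of_nonneg (by positivity : (0:ℝ) ≤ (2 ^ jnorm d j : ℝ)⁻¹)]
  apply mul_le_mul_of_nonneg_left _ (by positivity)
  refine (Finset.abs_sum_le_sum_abs _ _).trans ?_
  have hterm : ∀ a ∈ (Fintype.piFinset (fun _ : Fin d => Finset.range (M+1))).erase 0,
      |(∏ i, c i (a i)) * T a| ≤ 2 ^ n / 2 ^ jnorm d j * (2/3) ^ S * ∏ i, (4 * (3/4 : ℝ) ^ wt (a i)) := by
    intro a ha
    rw [abs_mul]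
    rcases Nat.lt_or_ge (∑ i, wt (a i)) S with hlt | hge
    · have : T a = 0 := char_sum d n t C hC j m a (Finset.ne_of_mem_erase ha)
        (by unfold jnorm at hS; omega) A
      rw [this, abs_zero, mul_zero]
      have : 0 ≤ ∏ i, (4 * (3/4 : ℝ) ^ wt (a i)) := Finset.prod_nonneg fun i _ => by positivity
      positivity
    · have h1 := prod_c_le c hc a S hge
      calc _ ≤ ((2/3) ^ S * ∏ i, (4 * (3/4 : ℝ) ^ wt (a i))) * (2 ^ n / 2 ^ jnorm d j) :=
            mul_le_mul h1 (hTb a) (abs_nonneg _) ((abs_nonneg _).trans h1)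
        _ = _ := by ring
  refine (Finset.sum_le_sum hterm).trans ?_
  rw [← Finset.mul_sum]
  apply mul_le_mul_of_nonneg_left _ (by positivity)
  refine le_trans (Finset.sum_le_sum_of_subset_of_nonneg (Finset.erase_subset _ _) ?_)
    (sum_wt_pi_le d M)
  intro a _ _
  exact Finset.prod_nonneg fun i _ => by positivity

lemma err_bound (d t : ℕ) (C : Fin d → ℕ → ℕ → ZMod 2) (hC : IsOrderSeq 2 t d C)
    (j : Fin d → ℤ) (m : Fin d → ℕ) (hm : ∀ i, m i < 2 ^ (j i).toNat) (c : Fin d → ℕ → ℝ)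
    (hc : ∀ i a, |c i a| ≤ 4 * (1/2) ^ wt a) (M N : ℕ) :
    |∑ k ∈ Finset.range N, Fx C j m c M k - N * Vx j c| ≤
      13 * 16 ^ d * 2 ^ t * (2 ^ jnorm d j : ℝ)⁻¹ := by
  set s := jnorm d j with hs
  set Err : ℕ → ℝ := fun X => ∑ k ∈ Finset.range X, Fx C j m c M k - X * Vx j c with hErr
  set T : ℕ → ℕ := fun n => N / 2 ^ n * 2 ^ n with hTdef
  set K : ℝ := 16 ^ d * 2 ^ t * (2 ^ s : ℝ)⁻¹ with hK
  have hKpos : 0 < K := by positivity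
  have hstep : ∀ e, |Err (T (s+t+1+e)) - Err (T (s+t+1+e+1))| ≤ K * (8/9) ^ e := by
    intro e
    set n := s+t+1+e with hn
    have hdiv : N / 2 ^ (n+1) = N / 2 ^ n / 2 := by rw [pow_succ, Nat.div_div_eq_div_mul]
    have hT1 : T (n+1) = (N / 2 ^ n / 2 * 2) * 2 ^ n := by
      simp only [hTdef]; rw [hdiv, pow_succ]; ring
    rcases Nat.mod_two_eq_zero_or_one (N / 2 ^ n) with h | h
    · have : T (n+1) = T n := by
        rw [hT1]; simp only [hTdef]; congr 1; omega
      rw [this, sub_self, abs_zero]; positivity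
    · have h2 : T n = T (n+1) + 2 ^ n := by
        rw [hT1]; simp only [hTdef]
        conv_lhs => rw [show N / 2 ^ n = N / 2 ^ n / 2 * 2 + 1 by omega]
        ring
      have hb : blk n (N / 2 ^ n / 2 * 2) = Finset.Ico (T (n+1)) (T n) := by
        rw [blk, hT1, h2, hT1, Nat.add_mul, one_mul]
      have hbe := block_err d n t C (hC n (by omega)) j m hm c hc M (N / 2 ^ n / 2 * 2)
        (t + 2 * (e + 1)) (by omega)
      rw [hb, Finset.sum_Ico_eq_sub _ (by rw [h2]; exact Nat.le_add_right _ _)] at hbe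
      have hE : Err (T n) - Err (T (n+1)) = (∑ k ∈ Finset.range (T n), Fx C j m c M k -
          ∑ k ∈ Finset.range (T (n+1)), Fx C j m c M k) - 2 ^ n * Vx j c := by
        simp only [hErr]
        rw [h2]; push_cast; ring
      rw [hE]
      refine hbe.trans ?_
      rw [← hs, show (2:ℝ) ^ n / 2 ^ s = 2 ^ t * 2 ^ (e+1) by
        rw [hn, div_eq_iff (by positivity)]; ring]
      rw [pow_add (2/3:ℝ), pow_mul (2/3:ℝ)]
      have e1 : (2:ℝ) ^ (e+1) * ((2/3)^2)^(e+1) = (8/9) ^ (e+1) := by rw [← mul_pow]; norm_num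
      have e2 : (2/3:ℝ) ^ t ≤ 1 := pow_le_one₀ (by norm_num) (by norm_num)
      have e3 : (8/9:ℝ) ^ (e+1) ≤ (8/9) ^ e := pow_le_pow_of_le_one (by norm_num) (by norm_num) (by omega)
      have e4 : (2/3:ℝ) ^ t * (8/9:ℝ) ^ (e+1) ≤ 1 * (8/9) ^ e :=
        mul_le_mul e2 e3 (by positivity) (by norm_num)
      calc (2 ^ s : ℝ)⁻¹ * (2 ^ t * 2 ^ (e + 1) * ((2 / 3) ^ t * ((2 / 3) ^ 2) ^ (e + 1)) * 16 ^ d)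
          = K * ((2/3:ℝ) ^ t * (2 ^ (e+1) * ((2/3)^2)^(e+1))) := by rw [hK]; ring
        _ = K * ((2/3:ℝ) ^ t * (8/9:ℝ) ^ (e+1)) := by rw [e1]
        _ ≤ K * (8/9) ^ e := by
          apply mul_le_mul_of_nonneg_left _ hKpos.le
          linarith
  have hind : ∀ f e, N ≤ e + f → |Err (T (s+t+1+e))| ≤ 9 * K * (8/9) ^ e := by
    intro f
    induction f with
    | zero =>
      intro e he
      have : T (s+t+1+e) = 0 := by
        simp only [hTdef]
        rw [Nat.div_eq_of_lt, zero_mul]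
        refine lt_of_lt_of_le (Nat.lt_two_pow_self (n := N)) (Nat.pow_le_pow_right (by norm_num) (by omega))
      rw [this]
      simp only [hErr]
      simp
      positivity
    | succ f ih =>
      intro e he
      have h1 := ih (e+1) (by omega)
      have h2 := hstep e
      rw [← add_assoc] at h1
      have h3 : |Err (T (s+t+1+e))| ≤ |Err (T (s+t+1+e)) - Err (T (s+t+1+e+1))| +
          |Err (T (s+t+1+e+1))| := by
        have := abs_add_le (Err (T (s+t+1+e)) - Err (T (s+t+1+e+1))) (Err (T (s+t+1+e+1)))
        simpa using this
      rw [pow_succ] at h1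
      linarith
  have hmain := hind N 0 (by omega)
  -- the remaining piece
  set n0 := s+t+1 with hn0
  have hTle : T n0 ≤ N := Nat.div_mul_le_self N (2 ^ n0)
  have hN : N < T n0 + 2 ^ n0 := Nat.lt_div_mul_add (by positivity)
  have hrest : |Err N - Err (T n0)| ≤ 4 * K := by
    have hE : Err N - Err (T n0) = ∑ k ∈ Finset.Ico (T n0) N, Fx C j m c M k
        - ((N:ℝ) - T n0) * Vx j c := by
      simp only [hErr]
      rw [Finset.sum_Ico_eq_sub _ hTle]; ring
    have hcnt := count_box d n0 t C (hC n0 (by omega)) (fun i => (j i).toNat) m hm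
      (by simp only [hs, jnorm] at hn0; omega) (N / 2 ^ n0)
    have hcnt' : (((blk n0 (N / 2 ^ n0)).filter (inBox C (fun i => (j i).toNat) m)).card : ℝ) =
        2 ^ t * 2 := by
      have : (((blk n0 (N / 2 ^ n0)).filter (inBox C (fun i => (j i).toNat) m)).card : ℝ) * 2 ^ s
          = 2 ^ n0 := by
        exact_mod_cast hcnt
      have h2 : (2:ℝ) ^ s ≠ 0 := by positivity
      apply mul_right_cancel₀ h2
      rw [this, hn0]; ring
    have hA : |∑ k ∈ Finset.Ico (T n0) N, Fx C j m c M k| ≤ 2 * K := by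
      refine (Finset.abs_sum_le_sum_abs _ _).trans ?_
      refine (Finset.sum_le_sum fun k _ => Fx_abs C j m c hc M k).trans ?_
      rw [← Finset.mul_sum]
      have : ∑ k ∈ Finset.Ico (T n0) N, (if inBox C (fun i => (j i).toNat) m k then (1:ℝ) else 0)
          ≤ 2 ^ t * 2 := by
        rw [← hcnt', Finset.card_filter]
        push_cast
        apply Finset.sum_le_sum_of_subset_of_nonneg
        · intro k hk
          rw [blk]
          simp only [Finset.mem_Ico] at hk ⊢
          refine ⟨hk.1, ?_⟩
          rw [Nat.add_mul, one_mul]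
          exact hk.2.trans hN
        · intro k _ _; split_ifs <;> simp
      calc _ ≤ (2 ^ jnorm d j : ℝ)⁻¹ * 16 ^ d * (2 ^ t * 2) :=
            mul_le_mul_of_nonneg_left this (by positivity)
        _ = 2 * K := by rw [hK, hs]; ring
    have hV : |Vx j c| ≤ (2 ^ s : ℝ)⁻¹ * ((2 ^ s : ℝ)⁻¹ * 16 ^ d) := by
      rw [Vx_eq, abs_mul, abs_mul, abs_of_nonneg (by positivity : (0:ℝ) ≤ (2 ^ jnorm d j : ℝ)⁻¹)]
      gcongr
      rw [Finset.abs_prod]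
      refine (Finset.prod_le_prod (fun i _ => abs_nonneg _) (g := fun _ => (16:ℝ)) (fun i _ => ?_)).trans ?_
      · refine (hc i 0).trans ?_
        simp [wt]; norm_num
      · simp
    have hB : |((N:ℝ) - T n0) * Vx j c| ≤ 2 * K := by
      rw [abs_mul]
      have h1 : |(N:ℝ) - T n0| ≤ 2 ^ n0 := by
        have a1 : ((T n0 : ℕ) : ℝ) ≤ N := by exact_mod_cast hTle
        have a2 : (N : ℝ) < T n0 + 2 ^ n0 := by exact_mod_cast hN
        rw [abs_of_nonneg (by linarith)]; linarith
      calc _ ≤ 2 ^ n0 * ((2 ^ s : ℝ)⁻¹ * ((2 ^ s : ℝ)⁻¹ * 16 ^ d)) :=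
            mul_le_mul h1 hV (abs_nonneg _) (by positivity)
        _ = 2 * K := by
          rw [hn0, hK, pow_add, pow_add]
          field_simp
    rw [hE]
    refine (abs_sub _ _).trans ?_
    linarith
  have h3 : |Err N| ≤ |Err N - Err (T n0)| + |Err (T n0)| := by
    have := abs_add_le (Err N - Err (T n0)) (Err (T n0))
    simpa using this
  have : |Err N| ≤ 13 * K := by
    simp only [pow_zero, mul_one] at hmain
    linarith
  calc _ ≤ 13 * K := this
    _ = _ := by rw [hK]; ring


/-- coefficients of the expansion -/
def cf (j : ℤ) (M a : ℕ) : ℝ :=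
  if a = 0 then (if j = -1 then 1/2 else -(1/4))
  else (if j = -1 then 1 else 1/2) * ((1/2) ^ (a+1) * (if a = M then 2 else 1))

lemma cf_abs (j : ℤ) (M a : ℕ) : |cf j M a| ≤ 4 * (1/2) ^ wt a := by
  unfold cf wt
  by_cases ha : a = 0
  · simp only [ha, if_true]
    split_ifs <;> norm_num [abs_le]
  · simp only [ha, if_false]
    have h : (0:ℝ) < (1/2) ^ a := by positivity
    rw [abs_of_nonneg (by split_ifs <;> positivity), pow_succ, pow_add]
    split_ifs <;> nlinarith

lemma val_sg (x : ZMod 2) : (x.val : ℝ) = (1 - sg x) / 2 := by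
  have h : ∀ z : ZMod 2, z = 0 ∨ z = 1 := by decide
  rcases h x with rfl | rfl
  · simp [sg]
  · simp [sg, ZMod.val_one]

lemma dsum_aux (b : ℕ → ZMod 2) (n : ℕ) :
    ∑ s ∈ Finset.range n, ((b s).val : ℝ) / 2 ^ (s+1) =
      1/2 - (1/2) ^ (n+1) - ∑ a ∈ Finset.range n, (1/2) ^ (a+2) * sg (b a) := by
  induction n with
  | zero => simp
  | succ n ih =>
    rw [Finset.sum_range_succ, ih, Finset.sum_range_succ, val_sg]
    have : (2 ^ (n+1) : ℝ) = ((1/2) ^ (n+1))⁻¹ := by simp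
    rw [this, div_inv_eq_mul]
    ring

lemma dsum (b : ℕ → ZMod 2) (n : ℕ) (hb : b n = 0) :
    ∑ s ∈ Finset.range (n+1), ((b s).val : ℝ) / 2 ^ (s+1) =
      1/2 - ∑ a ∈ Finset.range (n+1), (1/2) ^ (a+2) * (if a = n then 2 else 1) * sg (b a) := by
  rw [Finset.sum_range_succ, dsum_aux, Finset.sum_range_succ]
  have : ∑ a ∈ Finset.range n, (1/2:ℝ) ^ (a+2) * (if a = n then 2 else 1) * sg (b a) =
      ∑ a ∈ Finset.range n, (1/2:ℝ) ^ (a+2) * sg (b a) := by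
    apply Finset.sum_congr rfl
    intro a ha
    have : a ≠ n := by have := Finset.mem_range.mp ha; omega
    simp [this]
  rw [this]
  simp [hb, sg]
  ring

lemma prefD_real (b : ℕ → ZMod 2) (J : ℕ) :
    ∑ s ∈ Finset.range J, ((b s).val : ℝ) / 2 ^ (s+1) = (prefD b J : ℝ) / 2 ^ J := by
  induction J with
  | zero => simp [prefD]
  | succ J ih =>
    rw [Finset.sum_range_succ, ih, prefD]
    push_cast
    rw [pow_succ]
    field_simp

lemma coord_eq (C : ℕ → ℕ → ZMod 2) (k R : ℕ) (hR : ∀ ρ, R ≤ ρ → dig C ρ k = 0) :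
    digitalCoord C k = ∑ s ∈ Finset.range R, ((dig C s k).val : ℝ) / 2 ^ (s+1) := by
  unfold digitalCoord
  apply tsum_eq_sum
  intro ρ hρ
  have : dig C ρ k = 0 := hR ρ (by simpa using hρ)
  unfold dig at this
  rw [this]; simp

lemma coord_split (C : ℕ → ℕ → ZMod 2) (k J M : ℕ) (hR : ∀ ρ, M ≤ ρ → dig C ρ k = 0) :
    digitalCoord C k = ((prefD (fun ρ => dig C ρ k) J : ℝ) +
      ∑ s ∈ Finset.range M, ((dig C (J + s) k).val : ℝ) / 2 ^ (s+1)) / 2 ^ J := by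
  rw [coord_eq C k (J + M) (fun ρ hρ => hR ρ (by omega)), Finset.sum_range_add, add_div,
    prefD_real (fun ρ => dig C ρ k), Finset.sum_div]
  congr 1
  apply Finset.sum_congr rfl
  intro s _
  rw [div_div]
  congr 1
  ring

lemma int_step (z α β : ℝ) (hα : 0 ≤ α) (hβ : β ≤ 1) :
    ∫ x in Set.Icc (0:ℝ) 1, (if z < x then 1 else 0) * (if α ≤ x ∧ x < β then (1:ℝ) else 0) =
      max 0 (β - max z α) := by
  have h1 : (fun x : ℝ => (if z < x then 1 else 0) * (if α ≤ x ∧ x < β then (1:ℝ) else 0)) =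
      (Set.Ioi z ∩ Set.Ico α β).indicator (fun _ => (1:ℝ)) := by
    ext x
    simp only [Set.indicator, Set.mem_inter_iff, Set.mem_Ioi, Set.mem_Ico]
    split_ifs <;> simp_all
  rw [h1, integral_indicator (measurableSet_Ioi.inter measurableSet_Ico),
    Measure.restrict_restrict (measurableSet_Ioi.inter measurableSet_Ico)]
  have h2 : Set.Ioi z ∩ Set.Ico α β ∩ Set.Icc 0 1 = Set.Ioi z ∩ Set.Ico α β := by
    apply Set.inter_eq_left.mpr
    rintro x ⟨_, h⟩
    exact ⟨hα.trans h.1, h.2.le.trans hβ⟩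
  rw [h2]
  have h3 : (Set.Ioi z ∩ Set.Ico α β : Set ℝ) =ᵐ[volume] Set.Ioo (max z α) β := by
    have e1 : (Set.Ico α β : Set ℝ) =ᵐ[volume] Set.Ioo α β := Ioo_ae_eq_Ico.symm
    have e2 := (Filter.EventuallyEq.refl (ae volume) (Set.Ioi z)).inter e1
    have e3 : (Set.Ioi z ∩ Set.Ioo α β : Set ℝ) = Set.Ioo (max z α) β := by
      ext x
      simp only [Set.mem_inter_iff, Set.mem_Ioi, Set.mem_Ioo, max_lt_iff]
      tauto
    rw [e3] at e2
    exact e2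
  rw [setIntegral_congr_set h3]
  simp [Measure.real, max_comm, ENNReal.toReal_ofReal']

lemma int_lin (α β : ℝ) (hα : 0 ≤ α) (hαβ : α ≤ β) (hβ : β ≤ 1) :
    ∫ x in Set.Icc (0:ℝ) 1, x * (if α ≤ x ∧ x < β then (1:ℝ) else 0) = (β ^ 2 - α ^ 2) / 2 := by
  have h1 : (fun x : ℝ => x * (if α ≤ x ∧ x < β then (1:ℝ) else 0)) =
      (Set.Ico α β).indicator (fun x => x) := by
    ext x
    simp only [Set.indicator, Set.mem_Ico]
    split_ifs <;> simp_all
  rw [h1, integral_indicator measurableSet_Ico, Measure.restrict_restrict measurableSet_Ico]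
  have h2 : Set.Ico α β ∩ Set.Icc 0 1 = Set.Ico α β := by
    apply Set.inter_eq_left.mpr
    rintro x h
    exact ⟨hα.trans h.1, h.2.le.trans hβ⟩
  rw [h2, setIntegral_congr_set Ioo_ae_eq_Ico.symm, setIntegral_congr_set Ioo_ae_eq_Ioc,
    ← intervalIntegral.integral_of_le hαβ, integral_id]

lemma haar1_neg (m : ℕ) (x : ℝ) : haar1 (-1) m x = if 0 ≤ x ∧ x < 1 then 1 else 0 := by
  simp [haar1]

lemma haar1_nonneg (j : ℤ) (hj : j ≠ -1) (m : ℕ) (x : ℝ) : haar1 j m x =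
    (if (m:ℝ)/2^j.toNat ≤ x ∧ x < ((m:ℝ) + 1/2)/2^j.toNat then 1 else 0) -
    (if ((m:ℝ) + 1/2)/2^j.toNat ≤ x ∧ x < ((m:ℝ)+1)/2^j.toNat then 1 else 0) := by
  unfold haar1
  rw [if_neg hj]
  split_ifs with h1 h2
  · exact absurd h1.2 (not_lt.mpr h2.1)
  all_goals norm_num

lemma haar1_meas (j : ℤ) (m : ℕ) : Measurable (haar1 j m) := by
  have hI : ∀ α β : ℝ, Measurable fun x : ℝ => if α ≤ x ∧ x < β then (1:ℝ) else 0 := by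
    intro α β
    exact Measurable.ite (measurableSet_Ico (a := α) (b := β)) measurable_const measurable_const
  by_cases hj : j = -1
  · subst hj
    rw [funext (haar1_neg m)]
    exact hI 0 1
  · rw [funext (haar1_nonneg j hj m)]
    exact (hI _ _).sub (hI _ _)

lemma haar1_abs (j : ℤ) (m : ℕ) (x : ℝ) : |haar1 j m x| ≤ 1 := by
  unfold haar1
  split_ifs <;> simp

lemma int_of_bdd (f : ℝ → ℝ) (hf : Measurable f) (hb : ∀ x ∈ Set.Icc (0:ℝ) 1, |f x| ≤ 1) :
    IntegrableOn f (Set.Icc (0:ℝ) 1) := by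
  apply Measure.integrableOn_of_bounded (M := 1) (by simp) hf.aestronglyMeasurable
  filter_upwards [ae_restrict_mem measurableSet_Icc] with x hx
  exact hb x hx

lemma stepfn_meas (z : ℝ) : Measurable fun x : ℝ => if z < x then (1:ℝ) else 0 :=
  Measurable.ite (measurableSet_Ioi (a := z)) measurable_const measurable_const

lemma int_G_base (j : ℤ) (hj : j ≠ -1) (m : ℕ) (hm : m < 2 ^ j.toNat) (z : ℝ) :
    ∫ x in Set.Icc (0:ℝ) 1, (if z < x then 1 else 0) * haar1 j m x =
      max 0 (((m:ℝ) + 1/2)/2^j.toNat - max z ((m:ℝ)/2^j.toNat)) -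
      max 0 (((m:ℝ) + 1)/2^j.toNat - max z (((m:ℝ)+1/2)/2^j.toNat)) := by
  have hm' : (m:ℝ) + 1 ≤ 2 ^ j.toNat := by exact_mod_cast hm
  have hp : (0:ℝ) < 2 ^ j.toNat := by positivity
  have hintg : ∀ α β : ℝ, IntegrableOn (fun x : ℝ => (if z < x then 1 else 0) *
      (if α ≤ x ∧ x < β then (1:ℝ) else 0)) (Set.Icc (0:ℝ) 1) := by
    intro α β
    apply int_of_bdd
    · exact (stepfn_meas z).mul (Measurable.ite (measurableSet_Ico (a := α) (b := β)) measurable_const measurable_const)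
    · intro x _; split_ifs <;> simp
  simp only [haar1_nonneg j hj, mul_sub]
  rw [integral_sub (hintg _ _) (hintg _ _), int_step, int_step]
  · positivity
  · rw [div_le_one hp]; exact hm'
  · positivity
  · rw [div_le_one hp]; linarith

lemma int_lin_haar (j : ℤ) (m : ℕ) (M : ℕ) (hm : m < 2 ^ j.toNat) :
    ∫ x in Set.Icc (0:ℝ) 1, x * haar1 j m x =
      (2 ^ j.toNat : ℝ)⁻¹ * ((2 ^ j.toNat : ℝ)⁻¹ * cf j M 0) := by
  by_cases hj : j = -1
  · subst hj
    simp only [haar1_neg]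
    rw [int_lin 0 1 le_rfl zero_le_one le_rfl]
    simp [cf]
  · have hm' : (m:ℝ) + 1 ≤ 2 ^ j.toNat := by exact_mod_cast hm
    have hp : (0:ℝ) < 2 ^ j.toNat := by positivity
    have hintg : ∀ α β : ℝ, IntegrableOn (fun x : ℝ => x *
        (if α ≤ x ∧ x < β then (1:ℝ) else 0)) (Set.Icc (0:ℝ) 1) := by
      intro α β
      apply int_of_bdd
      · exact measurable_id.mul (Measurable.ite (measurableSet_Ico (a := α) (b := β)) measurable_const measurable_const)
      · intro x hx
        split_ifs
        · rw [mul_one, abs_of_nonneg hx.1]; exact hx.2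
        · simp
    simp only [haar1_nonneg j hj, mul_sub]
    rw [integral_sub (hintg _ _) (hintg _ _), int_lin, int_lin]
    · simp only [cf, if_true, hj, if_false]
      field_simp
      ring
    · positivity
    · gcongr; norm_num
    · rw [div_le_one hp]; exact hm'
    · positivity
    · gcongr; norm_num
    · rw [div_le_one hp]; linarith

lemma sum_val_nonneg (b : ℕ → ZMod 2) (n : ℕ) :
    0 ≤ ∑ s ∈ Finset.range n, ((b s).val : ℝ) / 2 ^ (s+1) :=
  Finset.sum_nonneg fun s _ => by positivity

lemma sum_val_le (b : ℕ → ZMod 2) (n : ℕ) :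
    ∑ s ∈ Finset.range n, ((b s).val : ℝ) / 2 ^ (s+1) ≤ 1 := by
  rw [prefD_real, div_le_one (by positivity)]
  exact_mod_cast (prefD_lt b n).le

lemma int_G (C : ℕ → ℕ → ZMod 2) (j : ℤ) (m M k : ℕ) (hm : m < 2 ^ j.toNat)
    (hM : ∀ ρ, M ≤ ρ → dig C ρ k = 0) :
    ∫ x in Set.Icc (0:ℝ) 1, (if digitalCoord C k < x then 1 else 0) * haar1 j m x =
      (2 ^ j.toNat : ℝ)⁻¹ * ((if prefD (fun ρ => dig C ρ k) j.toNat = m then 1 else 0)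
        * ∑ a ∈ Finset.range (M+2), cf j (M+1) a * chi C j a k) := by
  set b : ℕ → ZMod 2 := fun ρ => dig C ρ k with hb
  by_cases hj : j = -1
  · subst hj
    have hz : digitalCoord C k = ∑ s ∈ Finset.range (M+1), ((b s).val : ℝ) / 2 ^ (s+1) :=
      coord_eq C k (M+1) (fun ρ hρ => hM ρ (by omega))
    have h0 : 0 ≤ digitalCoord C k := by rw [hz]; exact sum_val_nonneg b _
    have h1 : digitalCoord C k ≤ 1 := by rw [hz]; exact sum_val_le b _
    simp only [haar1_neg]
    rw [int_step _ 0 1 le_rfl le_rfl, max_eq_left h0, max_eq_right (by linarith), hz,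
      dsum b M (hM M le_rfl), Finset.sum_range_succ' _ (M+1)]
    have : m = 0 := by simpa using hm
    subst this
    have e1 : ∀ a ∈ Finset.range (M+1), cf (-1) (M+1) (a+1) * chi C (-1) (a+1) k =
        (1/2) ^ (a+2) * (if a = M then 2 else 1) * sg (b a) := by
      intro a _
      simp [cf, chi, Qs, hb]
    rw [Finset.sum_congr rfl e1]
    have e2 : prefD b (Int.toNat (-1)) = 0 := rfl
    rw [e2]
    simp [cf, chi, Qs]
    ring
  · rw [int_G_base j hj m hm]
    set J := j.toNat with hJ
    have hp : (0:ℝ) < 2 ^ J := by positivity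
    set v : ℝ := ∑ s ∈ Finset.range (M+1), ((b (J + 1 + s)).val : ℝ) / 2 ^ (s+1) with hv
    have hv0 : 0 ≤ v := sum_val_nonneg (fun s => b (J+1+s)) _
    have hv1 : v ≤ 1 := sum_val_le (fun s => b (J+1+s)) _
    have hz : digitalCoord C k = ((prefD b J : ℝ) + ((b J).val / 2 + v / 2)) / 2 ^ J := by
      rw [coord_split C k J (M+2) (fun ρ hρ => hM ρ (by omega)), Finset.sum_range_succ', hv,
        Finset.sum_div, add_comm (∑ _ ∈ _, _)]
      congr 3
      · simp [hb]
      · apply Finset.sum_congr rfl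
        intro s _
        rw [div_div, ← pow_succ, hb, show J + 1 + s = J + (s+1) by ring]
    have hvs : v = 1/2 - ∑ a ∈ Finset.range (M+1), (1/2) ^ (a+2) * (if a = M then 2 else 1) *
        sg (b (J + 1 + a)) := dsum (fun s => b (J+1+s)) M (hM _ (by omega))
    have hS : ∑ a ∈ Finset.range (M+2), cf j (M+1) a * chi C j a k =
        - (1/4) + sg (b J) * (1/4 - v/2) := by
      rw [Finset.sum_range_succ', hvs]
      have e1 : ∀ a ∈ Finset.range (M+1), cf j (M+1) (a+1) * chi C j (a+1) k =
          (sg (b J) / 2) * ((1/2) ^ (a+2) * (if a = M then 2 else 1) * sg (b (J + 1 + a))) := by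
        intro a _
        have hq : Qs j (a+1) = {J, J + (a+1)} := by simp [Qs, hj, hJ]
        simp only [chi, hq]
        rw [Finset.prod_pair (by omega)]
        simp only [cf, hj, if_false, Nat.add_eq_zero_iff, one_ne_zero, and_false, hb,
          Nat.add_right_cancel_iff]
        rw [show J + 1 + a = J + (a+1) by ring]
        ring
      rw [Finset.sum_congr rfl e1, ← Finset.mul_sum]
      simp [cf, hj, chi, Qs]
      ring
    rw [hS, hz]
    set P := prefD b J with hP
    have hval : (b J).val = 0 ∧ sg (b J) = 1 ∨ (b J).val = 1 ∧ sg (b J) = -1 := by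
      have h : ∀ z : ZMod 2, z = 0 ∨ z = 1 := by decide
      rcases h (b J) with h | h <;> rw [h] <;> simp [sg, ZMod.val_one]
    have hu0 : (0:ℝ) ≤ (b J).val / 2 + v / 2 := by positivity
    have hu1 : ((b J).val : ℝ) / 2 + v / 2 ≤ 1 := by
      rcases hval with h | h <;> rw [h.1] <;> norm_num <;> linarith
    have hsimp : ∀ A B X : ℝ, max 0 (A / 2 ^ J - max (X / 2 ^ J) (B / 2 ^ J)) =
        (max 0 (A - max X B)) / 2 ^ J := by
      intro A B X
      rw [max_div_div_right hp.le, ← sub_div]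
      conv_lhs => rw [← zero_div ((2:ℝ) ^ J), max_div_div_right hp.le]
    rw [hsimp, hsimp, ← sub_div, div_eq_inv_mul]
    congr 1
    rcases lt_trichotomy P m with h | h | h
    · have h' : (P:ℝ) + 1 ≤ m := by exact_mod_cast h
      rw [if_neg h.ne, zero_mul, max_eq_right (by linarith : _ ≤ (m:ℝ)),
        max_eq_right (by linarith : _ ≤ (m:ℝ) + 1/2), max_eq_right (by linarith), max_eq_right (by linarith)]
      ring
    · rw [if_pos h, one_mul, h]
      rcases hval with h2 | h2 <;> rw [h2.1, h2.2]
      · push_cast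
        rw [max_eq_left (by linarith : (m:ℝ) ≤ _), max_eq_right (by linarith : _ ≤ (m:ℝ) + 1/2),
          max_eq_right (by linarith), max_eq_right (by linarith)]
        ring
      · push_cast
        rw [max_eq_left (by linarith : (m:ℝ) ≤ _), max_eq_left (by linarith : (m:ℝ) + 1/2 ≤ _),
          max_eq_left (by linarith), max_eq_right (by linarith)]
        ring
    · have h' : (m:ℝ) + 1 ≤ P := by exact_mod_cast h
      rw [if_neg h.ne', zero_mul, max_eq_left (by linarith : (m:ℝ) ≤ _),
        max_eq_left (by linarith : (m:ℝ) + 1/2 ≤ _), max_eq_left (by linarith), max_eq_left (by linarith)]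
      ring


lemma unitCube_restrict (d : ℕ) : (volume : Measure (Fin d → ℝ)).restrict (unitCube d) =
    Measure.pi (fun _ : Fin d => (volume : Measure ℝ).restrict (Set.Icc (0:ℝ) 1)) := by
  rw [volume_pi, unitCube, Measure.restrict_pi_pi]

lemma discSeq_eq (d : ℕ) (S : ℕ → Fin d → ℝ) (N : ℕ) (x : Fin d → ℝ) :
    discSeq d S N x = (N:ℝ)⁻¹ * ∑ k ∈ Finset.range N, ∏ i, (if S k i < x i then (1:ℝ) else 0)
      - ∏ i, x i := by
  classical
  unfold discSeq
  rw [Nat.card_eq_fintype_card, Fintype.card_subtype, Finset.card_filter, div_eq_inv_mul,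
    Finset.sum_range]
  push_cast
  congr 2
  apply Finset.sum_congr rfl
  intro k _
  rw [Finset.prod_ite_zero]
  simp

lemma haarCoeff_eq (d : ℕ) (E : Fin d → ℕ → ℕ → ZMod 2) (hE : Triangular2 d E) (N : ℕ)
    (j : Fin d → ℤ) (m : Fin d → ℕ) (hm : ∀ i, m i < 2 ^ (j i).toNat) :
    haarCoeff d (discSeq d (digitalSeq d E) N) j m =
      (N:ℝ)⁻¹ * ∑ k ∈ Finset.range N, Fx E j m (fun i => cf (j i) (2*N+1)) (2*N+1) k
        - Vx j (fun i => cf (j i) (2*N+1)) := by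
  unfold haarCoeff
  rw [unitCube_restrict]
  have hint1 : ∀ k, Integrable (fun x : Fin d → ℝ => ∏ i,
      ((if digitalSeq d E k i < x i then (1:ℝ) else 0) * haar1 (j i) (m i) (x i)))
      (Measure.pi (fun _ : Fin d => (volume : Measure ℝ).restrict (Set.Icc (0:ℝ) 1))) := by
    intro k
    refine Integrable.fintype_prod (f := fun i x => (if digitalSeq d E k i < x then (1:ℝ) else 0) *
      haar1 (j i) (m i) x) ?_
    intro i
    apply int_of_bdd
    · exact (stepfn_meas _).mul (haar1_meas _ _)
    · intro x _
      rw [abs_mul]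
      have := haar1_abs (j i) (m i) x
      split_ifs <;> simp [this]
  have hint2 : Integrable (fun x : Fin d → ℝ => ∏ i, (x i * haar1 (j i) (m i) (x i)))
      (Measure.pi (fun _ : Fin d => (volume : Measure ℝ).restrict (Set.Icc (0:ℝ) 1))) := by
    refine Integrable.fintype_prod (f := fun i x => x * haar1 (j i) (m i) x) ?_
    intro i
    apply int_of_bdd
    · exact measurable_id.mul (haar1_meas _ _)
    · intro x hx
      rw [abs_mul, abs_of_nonneg hx.1]
      have := haar1_abs (j i) (m i) x
      exact mul_le_one₀ hx.2 (abs_nonneg _) this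
  have hfun : (fun x : Fin d → ℝ => discSeq d (digitalSeq d E) N x * haarFn d j m x) =
      fun x => (N:ℝ)⁻¹ * ∑ k ∈ Finset.range N, (∏ i,
        ((if digitalSeq d E k i < x i then (1:ℝ) else 0) * haar1 (j i) (m i) (x i)))
        - ∏ i, (x i * haar1 (j i) (m i) (x i)) := by
    ext x
    rw [discSeq_eq, haarFn, sub_mul, mul_assoc, Finset.sum_mul]
    simp only [Finset.prod_mul_distrib]
  rw [hfun, integral_sub ((integrable_finsetSum _ fun k _ => hint1 k).const_mul _) hint2,
    integral_const_mul, integral_finsetSum _ (fun k _ => hint1 k)]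
  congr 1
  · congr 1
    apply Finset.sum_congr rfl
    intro k hk
    have hk' : k < N := by simpa using hk
    rw [integral_fintype_prod_eq_prod (fun i x => (if digitalSeq d E k i < x then (1:ℝ) else 0) *
      haar1 (j i) (m i) x)]
    unfold Fx
    apply Finset.prod_congr rfl
    intro i _
    exact int_G (E i) (j i) (m i) (2*N) k (hm i)
      (fun ρ hρ => dig_zero_of_tri (E i) (hE i) ρ k (by omega))
  · rw [integral_fintype_prod_eq_prod (fun i x => x * haar1 (j i) (m i) x)]
    unfold Vx
    apply Finset.prod_congr rfl
    intro i _
    exact int_lin_haar (j i) (m i) (2*N+1) (hm i)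

lemma coeff_bound (d t : ℕ) (E : Fin d → ℕ → ℕ → ZMod 2) (hS : IsOrderSeq 2 t d E)
    (hE : Triangular2 d E) (N : ℕ) (hN : 0 < N)
    (j : Fin d → ℤ) (m : Fin d → ℕ) (hm : ∀ i, m i < 2 ^ (j i).toNat) :
    |haarCoeff d (discSeq d (digitalSeq d E) N) j m| ≤
      13 * 16 ^ d * 2 ^ t * (2 ^ jnorm d j : ℝ)⁻¹ / N := by
  have h := err_bound d t E hS j m hm (fun i => cf (j i) (2*N+1))
    (fun i a => cf_abs _ _ _) (2*N+1) N
  have hN' : (0:ℝ) < N := by exact_mod_cast hN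
  rw [haarCoeff_eq d E hE N j m hm, le_div_iff₀ hN']
  refine le_trans (le_of_eq ?_) h
  rw [← abs_of_pos hN', ← abs_mul, abs_of_pos hN']
  congr 1
  field_simp

lemma coeff_bound_empty (d : ℕ) (E : Fin d → ℕ → ℕ → ZMod 2)
    (hE : Triangular2 d E) (N : ℕ)
    (j : Fin d → ℤ) (m : Fin d → ℕ) (hm : ∀ i, m i < 2 ^ (j i).toNat)
    (hempty : ∀ k < N, ¬ inBox E (fun i => (j i).toNat) m k) :
    |haarCoeff d (discSeq d (digitalSeq d E) N) j m| ≤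
      (2 ^ jnorm d j : ℝ)⁻¹ * (2 ^ jnorm d j : ℝ)⁻¹ := by
  rw [haarCoeff_eq d E hE N j m hm, Finset.sum_eq_zero, mul_zero, zero_sub, abs_neg, Vx_eq, abs_mul,
    abs_mul, abs_of_nonneg (by positivity : (0:ℝ) ≤ (2 ^ jnorm d j : ℝ)⁻¹)]
  · have : |∏ i, cf (j i) (2*N+1) 0| ≤ 1 := by
      rw [Finset.abs_prod]
      apply Finset.prod_le_one (fun i _ => abs_nonneg _)
      intro i _
      simp only [cf, if_true]
      split_ifs <;> norm_num [abs_le]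
    calc _ ≤ (2 ^ jnorm d j : ℝ)⁻¹ * ((2 ^ jnorm d j : ℝ)⁻¹ * 1) := by gcongr
      _ = _ := by ring
  · intro k hk
    have := Fx_abs E j m (fun i => cf (j i) (2*N+1)) (fun i a => cf_abs _ _ _) (2*N+1) k
    rw [if_neg (hempty k (by simpa using hk)), mul_zero] at this
    exact abs_nonpos_iff.mp this


lemma Dfin_card (d : ℕ) (j : Fin d → ℤ) : (Dfin d j).card = 2 ^ jnorm d j := by
  simp [Dfin, jnorm, Finset.prod_pow_eq_pow_sum]

lemma term_eq (p q S M K N : ℝ) (hp : 1 ≤ p) (hS : 0 < S) (hM : 0 < M)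
    (hK : 0 < K) (hN : 0 < N) :
    S ^ ((0 - 1 / p + 1) * q) * (M * (K * S⁻¹ / N) ^ p) ^ (q / p) =
      (M / S) ^ (q / p) * (K / N) ^ q := by
  have hp0 : p ≠ 0 := by positivity
  have hA : 0 < K * S⁻¹ / N := by positivity
  rw [Real.mul_rpow hM.le (by positivity), ← Real.rpow_mul hA.le,
    show p * (q / p) = q by field_simp, show K * S⁻¹ / N = (K / N) / S by field_simp,
    Real.div_rpow (by positivity) hS.le, Real.div_rpow hM.le hS.le,
    show (0 - 1 / p + 1) * q = q - q / p by ring, Real.rpow_sub hS]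
  have h1 := (Real.rpow_pos_of_pos hS q).ne'
  have h2 := (Real.rpow_pos_of_pos hS (q / p)).ne'
  field_simp

/-- the inner sum is at most `min(2^s, 2N)` times the largest term -/
lemma inner_bound (d t : ℕ) (E : Fin d → ℕ → ℕ → ZMod 2)
    (hS : IsOrderSeq 2 t d E) (hE : Triangular2 d E) (N : ℕ) (hN : 0 < N)
    (p : ℝ) (hp : 1 ≤ p) (j : Fin d → ℤ) (hs : (N : ℝ) ≤ 2 ^ jnorm d j) :
    (∑ m ∈ Dfin d j, |haarCoeff d (discSeq d (digitalSeq d E) N) j m| ^ p) ≤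
      2 * N * (13 * 16 ^ d * 2 ^ t * (2 ^ jnorm d j : ℝ)⁻¹ / N) ^ p := by
  classical
  set S : ℝ := 2 ^ jnorm d j with hSdef
  set K : ℝ := 13 * 16 ^ d * 2 ^ t with hKdef
  have hK1 : 1 ≤ K := by
    have h1 : (1 : ℝ) ≤ 16 ^ d := one_le_pow₀ (by norm_num)
    have h2 : (1 : ℝ) ≤ 2 ^ t := one_le_pow₀ (by norm_num)
    have h3 : (1 : ℝ) ≤ 16 ^ d * 2 ^ t := one_le_mul_of_one_le_of_one_le h1 h2
    rw [hKdef]; nlinarith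
  have hS0 : 0 < S := by positivity
  have hN0 : (0 : ℝ) < N := by exact_mod_cast hN
  set A : ℝ := K * S⁻¹ / N with hA
  have hA0 : 0 < A := by positivity
  have hmem : ∀ m ∈ Dfin d j, ∀ i, m i < 2 ^ (j i).toNat := by
    intro m hm i
    simpa [Dfin] using (Fintype.mem_piFinset.mp hm) i
  set T : Finset (Fin d → ℕ) := (Finset.range N).image
    (fun k i => prefD (fun ρ => dig (E i) ρ k) ((j i).toNat)) with hT
  have hTcard : (T.card : ℝ) ≤ N := by
    have : T.card ≤ N := by
      simpa using (Finset.card_image_le (s := Finset.range N)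
        (f := fun k i => prefD (fun ρ => dig (E i) ρ k) ((j i).toNat)))
    exact_mod_cast this
  rw [← Finset.sum_filter_add_sum_filter_not (Dfin d j) (fun m => m ∈ T)]
  have h1 : (∑ m ∈ (Dfin d j).filter (fun m => m ∈ T),
      |haarCoeff d (discSeq d (digitalSeq d E) N) j m| ^ p) ≤ N * A ^ p := by
    calc _ ≤ ∑ m ∈ (Dfin d j).filter (fun m => m ∈ T), A ^ p := by
          apply Finset.sum_le_sum
          intro m hm
          have hm' := (Finset.mem_filter.mp hm).1
          exact Real.rpow_le_rpow (abs_nonneg _)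
            (coeff_bound d t E hS hE N hN j m (hmem m hm')) (by linarith)
      _ = ((Dfin d j).filter (fun m => m ∈ T)).card * A ^ p := by
          rw [Finset.sum_const, nsmul_eq_mul]
      _ ≤ N * A ^ p := by
          apply mul_le_mul_of_nonneg_right _ (by positivity)
          refine le_trans ?_ hTcard
          have : ((Dfin d j).filter (fun m => m ∈ T)).card ≤ T.card := by
            apply Finset.card_le_card
            intro m hm
            exact (Finset.mem_filter.mp hm).2
          exact_mod_cast this
  have h2 : (∑ m ∈ (Dfin d j).filter (fun m => ¬ m ∈ T),
      |haarCoeff d (discSeq d (digitalSeq d E) N) j m| ^ p) ≤ N * A ^ p := by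
    calc _ ≤ ∑ m ∈ (Dfin d j).filter (fun m => ¬ m ∈ T), (S⁻¹ * S⁻¹) ^ p := by
          apply Finset.sum_le_sum
          intro m hm
          have hm' := Finset.mem_filter.mp hm
          apply Real.rpow_le_rpow (abs_nonneg _) _ (by linarith)
          apply coeff_bound_empty d E hE N j m (hmem m hm'.1)
          intro k hk hbox
          apply hm'.2
          rw [hT, Finset.mem_image]
          exact ⟨k, Finset.mem_range.mpr hk, funext hbox⟩
      _ = ((Dfin d j).filter (fun m => ¬ m ∈ T)).card * (S⁻¹ * S⁻¹) ^ p := by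
          rw [Finset.sum_const, nsmul_eq_mul]
      _ ≤ S * (S⁻¹ * S⁻¹) ^ p := by
          apply mul_le_mul_of_nonneg_right _ (by positivity)
          have : ((Dfin d j).filter (fun m => ¬ m ∈ T)).card ≤ 2 ^ jnorm d j := by
            rw [← Dfin_card]
            exact Finset.card_filter_le _ _
          rw [hSdef]
          exact_mod_cast this
      _ ≤ S * ((N / S) * A ^ p) := by
          apply mul_le_mul_of_nonneg_left _ hS0.le
          have e1 : S⁻¹ * S⁻¹ ≤ (N / S) * A := by
            rw [hA, show N / S * (K * S⁻¹ / N) = K * (S⁻¹ * S⁻¹) by field_simp]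
            have : 0 ≤ S⁻¹ * S⁻¹ := by positivity
            nlinarith
          calc (S⁻¹ * S⁻¹) ^ p ≤ ((N / S) * A) ^ p :=
                Real.rpow_le_rpow (by positivity) e1 (by linarith)
            _ = (N / S) ^ p * A ^ p := Real.mul_rpow (by positivity) hA0.le
            _ ≤ (N / S) * A ^ p := by
                apply mul_le_mul_of_nonneg_right _ (by positivity)
                have hle : (N : ℝ) / S ≤ 1 := by rw [div_le_one hS0]; exact hs
                calc ((N : ℝ) / S) ^ p ≤ ((N : ℝ) / S) ^ (1 : ℝ) :=
                      Real.rpow_le_rpow_of_exponent_ge (by positivity) hle hp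
                  _ = N / S := Real.rpow_one _
      _ = N * A ^ p := by field_simp
  linarith

lemma inner_bound' (d t : ℕ) (E : Fin d → ℕ → ℕ → ZMod 2)
    (hS : IsOrderSeq 2 t d E) (hE : Triangular2 d E) (N : ℕ) (hN : 0 < N)
    (p : ℝ) (hp : 1 ≤ p) (j : Fin d → ℤ) :
    (∑ m ∈ Dfin d j, |haarCoeff d (discSeq d (digitalSeq d E) N) j m| ^ p) ≤
      2 ^ jnorm d j * (13 * 16 ^ d * 2 ^ t * (2 ^ jnorm d j : ℝ)⁻¹ / N) ^ p := by
  calc _ ≤ ∑ m ∈ Dfin d j, (13 * 16 ^ d * 2 ^ t * (2 ^ jnorm d j : ℝ)⁻¹ / N) ^ p := by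
        apply Finset.sum_le_sum
        intro m hm
        apply Real.rpow_le_rpow (abs_nonneg _) _ (by linarith)
        apply coeff_bound d t E hS hE N hN j m
        intro i
        simpa [Dfin] using (Fintype.mem_piFinset.mp hm) i
    _ = _ := by
        rw [Finset.sum_const, nsmul_eq_mul, Dfin_card]
        push_cast
        rfl

/-- bound for one level `j` of the sum -/
lemma level_bound (d t : ℕ) (E : Fin d → ℕ → ℕ → ZMod 2)
    (hS : IsOrderSeq 2 t d E) (hE : Triangular2 d E) (N : ℕ) (hN : 2 ≤ N)
    (p q : ℝ) (hp : 1 ≤ p) (hq : 1 ≤ q) (j : Fin d → ℤ) :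
    (2:ℝ) ^ ((jnorm d j : ℝ) * (0 - 1/p + 1) * q) *
      (∑ m ∈ Dfin d j, |haarCoeff d (discSeq d (digitalSeq d E) N) j m| ^ p) ^ (q / p) ≤
    (8 : ℝ) ^ (q / p) * (13 * 16 ^ d * 2 ^ t / N) ^ q *
      (Real.exp (-(q / p * Real.log 2 / Nat.log 2 N))) ^ jnorm d j := by
  set s := jnorm d j with hsdef
  set L := Nat.log 2 N with hL
  have hL1 : 1 ≤ L := Nat.log_pos (by norm_num) hN
  have hN0 : (0 : ℝ) < N := by exact_mod_cast (by omega : 0 < N)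
  have hLr : (1 : ℝ) ≤ L := by exact_mod_cast hL1
  have hNL : (N : ℝ) ≤ 2 ^ (L + 1) := by
    exact_mod_cast (Nat.lt_pow_succ_log_self (by norm_num : 1 < 2) N).le
  have hqp : 0 ≤ q / p := by positivity
  have hlog : 0 < Real.log 2 := Real.log_pos (by norm_num)
  have hexp2 : ∀ n : ℕ, (2 : ℝ) ^ n = Real.exp (n * Real.log 2) := by
    intro n
    rw [← Real.rpow_natCast, Real.rpow_def_of_pos (by norm_num), mul_comm]
  obtain ⟨M, hM0, hsum, hMS⟩ : ∃ M : ℝ, 0 < M ∧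
      (∑ m ∈ Dfin d j, |haarCoeff d (discSeq d (digitalSeq d E) N) j m| ^ p) ≤
        M * (13 * 16 ^ d * 2 ^ t * (2 ^ s : ℝ)⁻¹ / N) ^ p ∧
      M / 2 ^ s ≤ 8 * Real.exp (-(s * Real.log 2 / L)) := by
    by_cases h : s ≤ L
    · refine ⟨2 ^ s, by positivity, inner_bound' d t E hS hE N (by omega) p hp j, ?_⟩
      rw [div_self (by positivity)]
      have h1 : (s : ℝ) * Real.log 2 / L ≤ Real.log 2 := by
        rw [div_le_iff₀ (by linarith)]
        have : (s : ℝ) ≤ L := by exact_mod_cast h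
        nlinarith
      have h2 : Real.exp (-Real.log 2) ≤ Real.exp (-(s * Real.log 2 / L)) :=
        Real.exp_le_exp.mpr (by linarith)
      rw [Real.exp_neg, Real.exp_log (by norm_num)] at h2
      linarith
    · push Not at h
      refine ⟨2 * N, by positivity, inner_bound d t E hS hE N (by omega) p hp j ?_, ?_⟩
      · exact hNL.trans (pow_le_pow_right₀ (by norm_num) h)
      · rw [div_le_iff₀ (by positivity), hexp2 s, mul_assoc, ← Real.exp_add]
        have h1 : (L : ℝ) * Real.log 2 - Real.log 2 ≤
            -(s * Real.log 2 / L) + s * Real.log 2 := by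
          have hsL : (L : ℝ) ≤ s := by exact_mod_cast h.le
          have : (s : ℝ) * Real.log 2 / L ≤ s * Real.log 2 - L * Real.log 2 + Real.log 2 := by
            rw [div_le_iff₀ (by linarith)]
            have : 0 ≤ Real.log 2 * ((s - L) * (L - 1)) :=
              mul_nonneg hlog.le (mul_nonneg (by linarith) (by linarith))
            nlinarith
          linarith
        have h2 := Real.exp_le_exp.mpr h1
        rw [Real.exp_sub, ← hexp2, Real.exp_log (by norm_num)] at h2
        rw [pow_succ] at hNL
        linarith
  have hS0 : (0 : ℝ) < 2 ^ s := by positivity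
  calc _ ≤ ((2:ℝ) ^ s) ^ ((0 - 1/p + 1) * q) *
        (M * (13 * 16 ^ d * 2 ^ t * (2 ^ s : ℝ)⁻¹ / N) ^ p) ^ (q / p) := by
        rw [← Real.rpow_natCast, ← Real.rpow_mul (by norm_num), mul_assoc (s : ℝ)]
        apply mul_le_mul_of_nonneg_left _ (by positivity)
        apply Real.rpow_le_rpow (Finset.sum_nonneg fun m _ => by positivity) _ hqp
        simpa [Real.rpow_natCast] using hsum
    _ = (M / 2 ^ s) ^ (q / p) * (13 * 16 ^ d * 2 ^ t / N) ^ q :=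
        term_eq p q _ M _ N hp hS0 hM0 (by positivity) hN0
    _ ≤ (8 * Real.exp (-(s * Real.log 2 / L))) ^ (q / p) * (13 * 16 ^ d * 2 ^ t / N) ^ q := by
        apply mul_le_mul_of_nonneg_right _ (by positivity)
        exact Real.rpow_le_rpow (by positivity) hMS hqp
    _ = _ := by
        rw [Real.mul_rpow (by norm_num) (Real.exp_pos _).le, ← Real.exp_mul, ← Real.exp_nat_mul]
        have : -(s * Real.log 2 / L) * (q / p) = s * -(q / p * Real.log 2 / L) := by ring
        rw [this]
        ring

lemma geom_pred (x : ℝ) (hx0 : 0 ≤ x) (hx1 : x < 1) (B : ℕ) :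
    ∑ n ∈ Finset.range B, x ^ (n - 1) ≤ 1 + (1 - x)⁻¹ := by
  have hpos : 0 < (1 - x)⁻¹ := inv_pos.mpr (by linarith)
  cases B with
  | zero => simp; linarith
  | succ B =>
    rw [Finset.sum_range_succ']
    simp only [Nat.add_sub_cancel, Nat.zero_sub, pow_zero]
    have h : ∑ n ∈ Finset.range B, x ^ n ≤ (1 - x)⁻¹ := by
      rw [← tsum_geometric_of_lt_one hx0 hx1]
      exact (summable_geometric_of_lt_one hx0 hx1).sum_le_tsum _ (fun n _ => by positivity)
    linarith

/-- summation over all levels -/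
lemma sum_levels (d : ℕ) (x : ℝ) (hx0 : 0 ≤ x) (hx1 : x < 1) (F : Finset (validJ d)) :
    ∑ j ∈ F, x ^ jnorm d j.1 ≤ (1 + (1 - x)⁻¹) ^ d := by
  classical
  set φ : validJ d → (Fin d → ℕ) := fun j i => (j.1 i + 1).toNat with hφ
  have hinj : Function.Injective φ := by
    intro a b hab
    apply Subtype.ext
    funext i
    have h1 := congrFun hab i
    have h2 : -1 ≤ a.1 i := a.2 i
    have h3 : -1 ≤ b.1 i := b.2 i
    simp only [hφ] at h1
    omega
  have hterm : ∀ j : validJ d, x ^ jnorm d j.1 = ∏ i, x ^ (φ j i - 1) := by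
    intro j
    rw [Finset.prod_pow_eq_pow_sum, jnorm]
    congr 1
    apply Finset.sum_congr rfl
    intro i _
    simp only [hφ]
    omega
  set B : ℕ := (∑ j ∈ F, ∑ i, φ j i) + 1 with hB
  have hsub : F.image φ ⊆ Fintype.piFinset fun _ : Fin d => Finset.range B := by
    intro n hn
    obtain ⟨j, hj, rfl⟩ := Finset.mem_image.mp hn
    rw [Fintype.mem_piFinset]
    intro i
    rw [Finset.mem_range, hB]
    have h1 : φ j i ≤ ∑ i, φ j i :=
      Finset.single_le_sum (f := fun i => φ j i) (fun _ _ => Nat.zero_le _) (Finset.mem_univ i)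
    have h2 : ∑ i, φ j i ≤ ∑ j ∈ F, ∑ i, φ j i :=
      Finset.single_le_sum (f := fun j => ∑ i, φ j i) (fun _ _ => Nat.zero_le _) hj
    omega
  calc ∑ j ∈ F, x ^ jnorm d j.1 = ∑ j ∈ F, ∏ i, x ^ (φ j i - 1) :=
        Finset.sum_congr rfl fun j _ => hterm j
    _ = ∑ n ∈ F.image φ, ∏ i, x ^ (n i - 1) :=
        (Finset.sum_image (f := fun n : Fin d → ℕ => ∏ i, x ^ (n i - 1))
          (fun a _ b _ h => hinj h)).symm
    _ ≤ ∑ n ∈ Fintype.piFinset fun _ : Fin d => Finset.range B, ∏ i, x ^ (n i - 1) :=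
        Finset.sum_le_sum_of_subset_of_nonneg hsub
          (fun n _ _ => Finset.prod_nonneg fun i _ => by positivity)
    _ = ∏ _i : Fin d, ∑ n ∈ Finset.range B, x ^ (n - 1) :=
        (Finset.prod_univ_sum (fun _ : Fin d => Finset.range B)
          (fun _ n => x ^ (n - 1))).symm
    _ ≤ ∏ _i : Fin d, (1 + (1 - x)⁻¹) :=
        Finset.prod_le_prod (fun i _ => Finset.sum_nonneg fun n _ => by positivity)
          (fun i _ => geom_pred x hx0 hx1 B)
    _ = _ := by simp

lemma inv_one_sub_exp (y : ℝ) (hy : 0 < y) : (1 - Real.exp (-y))⁻¹ ≤ 1 + 1 / y := by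
  have h1 : Real.exp (-y) ≤ (1 + y)⁻¹ := by
    rw [Real.exp_neg]
    apply inv_anti₀ (by linarith)
    linarith [Real.add_one_le_exp y]
  have h2 : (1 : ℝ) + 1 / y = (1 - (1 + y)⁻¹)⁻¹ := by
    have : (1 : ℝ) - (1 + y)⁻¹ = y / (1 + y) := by field_simp; ring
    rw [this]
    field_simp
    ring
  rw [h2]
  apply inv_anti₀ _ (by linarith)
  have : (1 + y)⁻¹ < 1 := inv_lt_one_of_one_lt₀ (by linarith)
  linarith

/-- Besov `S⁰_{p,q}B` upper bound for order `2` digital `(t,d)`-sequences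
with triangular generating matrices:
`∑_j 2^{|j|(1-1/p)q} (∑_m |⟨D^N,h_{j,m}⟩|^p)^{q/p} ≤ C · 2^{qt} · N^{-q} (log N)^d`. -/
theorem besov_s0_upper_bound (d : ℕ) (hd : 0 < d) (p q : ℝ) (hp : 1 ≤ p) (hq : 1 ≤ q) :
    ∃ C : ℝ, 0 < C ∧ ∀ (t : ℕ) (E : Fin d → ℕ → ℕ → ZMod 2),
      IsOrderSeq 2 t d E → Triangular2 d E →
      ∀ N : ℕ, 2 ≤ N →
        besovSum d p q 0 (discSeq d (digitalSeq d E) N) ≤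
          ENNReal.ofReal (C * (2:ℝ) ^ (q * (t:ℝ)) * (N:ℝ) ^ (-q) * Real.log N ^ d) := by
  have hlog : 0 < Real.log 2 := Real.log_pos (by norm_num)
  have hlam : 0 < q / p * Real.log 2 := by positivity
  set lam := q / p * Real.log 2 with hlamdef
  refine ⟨(8 : ℝ) ^ (q / p) * (13 * 16 ^ d) ^ q * ((2 + 1 / lam) / Real.log 2) ^ d,
    by positivity, ?_⟩
  intro t E hS hE N hN
  have hN0 : (0 : ℝ) < N := by exact_mod_cast (by omega : 0 < N)
  have hL1 : 1 ≤ Nat.log 2 N := Nat.log_pos (by norm_num) hN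
  have hLr : (1 : ℝ) ≤ (Nat.log 2 N : ℝ) := by exact_mod_cast hL1
  have hLlog : (Nat.log 2 N : ℝ) ≤ Real.log N / Real.log 2 := by
    rw [le_div_iff₀ hlog, ← Real.log_pow]
    apply Real.log_le_log (by positivity)
    exact_mod_cast Nat.pow_log_le_self 2 (by omega : N ≠ 0)
  set y := lam / (Nat.log 2 N : ℝ) with hy
  have hy0 : 0 < y := by positivity
  have hx0 : 0 ≤ Real.exp (-y) := (Real.exp_pos _).le
  have hx1 : Real.exp (-y) < 1 := by
    rw [Real.exp_lt_one_iff]; linarith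
  have hA0 : 0 ≤ (8 : ℝ) ^ (q / p) * (13 * 16 ^ d * 2 ^ t / N : ℝ) ^ q := by positivity
  have hgeo : 1 + (1 - Real.exp (-y))⁻¹ ≤ (2 + 1 / lam) / Real.log 2 * Real.log N := by
    have h1 := inv_one_sub_exp y hy0
    have h2 : 1 / y = (Nat.log 2 N : ℝ) * (1 / lam) := by rw [hy]; field_simp
    have h3 : (2 + 1 / lam) / Real.log 2 * Real.log N =
        (2 + 1 / lam) * (Real.log N / Real.log 2) := by ring
    have h4 : 0 < 1 / lam := by positivity
    rw [h3]
    calc _ ≤ 2 + (Nat.log 2 N : ℝ) * (1 / lam) := by linarith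
      _ ≤ (2 + 1 / lam) * (Nat.log 2 N : ℝ) := by nlinarith
      _ ≤ _ := mul_le_mul_of_nonneg_left hLlog (by positivity)
  have hinv : 0 ≤ (1 - Real.exp (-y))⁻¹ := inv_nonneg.mpr (by linarith)
  unfold besovSum
  rw [ENNReal.tsum_eq_iSup_sum]
  apply iSup_le
  intro F
  rw [← ENNReal.ofReal_sum_of_nonneg]
  · apply ENNReal.ofReal_le_ofReal
    calc _ ≤ ∑ j ∈ F, (8 : ℝ) ^ (q / p) * (13 * 16 ^ d * 2 ^ t / N : ℝ) ^ q *
          (Real.exp (-y)) ^ jnorm d j.1 :=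
          Finset.sum_le_sum fun j _ => level_bound d t E hS hE N hN p q hp hq j.1
      _ = (8 : ℝ) ^ (q / p) * (13 * 16 ^ d * 2 ^ t / N : ℝ) ^ q *
          ∑ j ∈ F, (Real.exp (-y)) ^ jnorm d j.1 := by rw [Finset.mul_sum]
      _ ≤ (8 : ℝ) ^ (q / p) * (13 * 16 ^ d * 2 ^ t / N : ℝ) ^ q *
          ((2 + 1 / lam) / Real.log 2 * Real.log N) ^ d := by
          apply mul_le_mul_of_nonneg_left _ hA0
          exact (sum_levels d _ hx0 hx1 F).trans (pow_le_pow_left₀ (by linarith) hgeo d)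
      _ = _ := by
          rw [mul_pow, Real.div_rpow (by positivity) hN0.le,
            Real.mul_rpow (by positivity) (by positivity), Real.rpow_neg hN0.le,
            mul_comm q (t : ℝ), Real.rpow_mul (by norm_num), Real.rpow_natCast]
          field_simp
  · intro j _
    have : 0 ≤ ∑ m ∈ Dfin d j.1, |haarCoeff d (discSeq d (digitalSeq d E) N) j.1 m| ^ p :=
      Finset.sum_nonneg fun m _ => by positivity
    positivity


end
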